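/- arXiv:1308.3316 — 14 statements merged into one kernel-verified Lean document; each statement's English description precedes it below -/
import Mathlib

section
/- Let G be a finite abelian group and let m_1, …, m_t be positive integers such that G is isomorphic to the direct sum C_{m_1} ⊕ ⋯ ⊕ C_{m_t} of cyclic groups of those orders. Then ∑_{i=1}^t ⌊log₂ m_i⌋ + 1 ≤ D_±(G) ≤ ⌊∑_{i=1}^t log₂ m_i⌋ + 1 = ⌊log₂ |G|⌋ + 1. -/
open Finset

/-- A sequence `g` over `G` has an `A`-weighted zero-subsum: there is a nonempty
index set `I` and weights `a i ∈ A` for `i ∈ I` with `∑ i ∈ I, a i • g i = 0`. -/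
def HasWZS (A : Set ℤ) {G : Type*} [AddCommGroup G] {ℓ : ℕ} (g : Fin ℓ → G) : Prop :=
  ∃ (I : Finset (Fin ℓ)) (a : Fin ℓ → ℤ), I.Nonempty ∧ (∀ i ∈ I, a i ∈ A) ∧
    ∑ i ∈ I, a i • g i = 0

/-- The `A`-weighted Davenport constant of `G`: the smallest `ℓ` such that every
sequence of length `ℓ` over `G` has an `A`-weighted zero-subsum. -/
noncomputable def DavW (A : Set ℤ) (G : Type*) [AddCommGroup G] : ℕ :=
  sInf {ℓ : ℕ | ∀ g : Fin ℓ → G, HasWZS A g}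

/-- The plus-minus weighted Davenport constant. -/
noncomputable def Davpm (G : Type*) [AddCommGroup G] : ℕ :=
  DavW ({1, -1} : Set ℤ) G

theorem abs_sum_lt_pow (c : ℕ → ℤ) (hc : ∀ j, |c j| ≤ 1) (k : ℕ) :
    |∑ j ∈ range k, c j * 2 ^ j| < 2 ^ k := by
  induction k with
  | zero => simp
  | succ k ih =>
    rw [sum_range_succ, pow_succ]
    have h1 := abs_le.1 (hc k)
    have h2 := abs_lt.1 ih
    have h3 : (0 : ℤ) < 2 ^ k := by positivity
    rw [abs_lt]
    constructor <;> nlinarith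

theorem coeff_zero (c : ℕ → ℤ) (hc : ∀ j, |c j| ≤ 1) (k : ℕ)
    (h : ∑ j ∈ range k, c j * 2 ^ j = 0) : ∀ j < k, c j = 0 := by
  induction k with
  | zero => simp
  | succ k ih =>
    rw [sum_range_succ] at h
    have h1 := abs_le.1 (hc k)
    have h2 := abs_lt.1 (abs_sum_lt_pow c hc k)
    have h3 : (0 : ℤ) < 2 ^ k := by positivity
    have h4 : c k = 0 := by
      have : c k = 0 ∨ c k = 1 ∨ c k = -1 := by omega
      rcases this with h5 | h5 | h5
      · exact h5
      · rw [h5] at h; linarith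
      · rw [h5] at h; linarith
    rw [h4] at h
    intro j hj
    rcases Nat.lt_succ_iff_lt_or_eq.1 hj with h5 | h5
    · exact ih (by linarith) j h5
    · rw [h5, h4]

theorem floor_logb_nat (n : ℕ) : ⌊Real.logb 2 (n : ℝ)⌋ = (Nat.log 2 n : ℤ) := by
  have := Real.floor_logb_natCast (b := 2) (r := (n : ℝ)) (by positivity)
  rw [Int.log_natCast] at this
  exact_mod_cast this

theorem upper_mem (G : Type) [AddCommGroup G] [Fintype G] (l : ℕ)
    (hl : Fintype.card G < 2 ^ l) (g : Fin l → G) : HasWZS ({1, -1} : Set ℤ) g := by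
  classical
  obtain ⟨S, T, hne, hST⟩ := Fintype.exists_ne_map_eq_of_card_lt
    (fun S : Finset (Fin l) => ∑ i ∈ S, g i) (by simpa using hl)
  refine ⟨(S \ T) ∪ (T \ S), fun i => if i ∈ S then 1 else -1, ?_, ?_, ?_⟩
  · rw [nonempty_iff_ne_empty]
    intro h
    apply hne
    ext x
    have := congrArg (fun U => x ∈ U) h
    simp at this
    tauto
  · intro i _
    by_cases h : i ∈ S <;> simp [h]
  · rw [sum_union (disjoint_sdiff_sdiff)]
    have h1 : ∑ i ∈ S \ T, (if i ∈ S then (1 : ℤ) else -1) • g i = ∑ i ∈ S \ T, g i :=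
      sum_congr rfl fun i hi => by simp [(mem_sdiff.1 hi).1]
    have h2 : ∑ i ∈ T \ S, (if i ∈ S then (1 : ℤ) else -1) • g i = - ∑ i ∈ T \ S, g i := by
      rw [← sum_neg_distrib]
      exact sum_congr rfl fun i hi => by simp [(mem_sdiff.1 hi).2]
    have h3 := sum_sdiff_sub_sum_sdiff (s₁ := T) (s₂ := S) (f := g)
    rw [h1, h2, ← sub_eq_add_neg, h3]
    simp [hST]

theorem lower_not (t : ℕ) (m : Fin t → ℕ) (hm : ∀ i, 0 < m i) (l : ℕ)
    (hl : l ≤ ∑ i, Nat.log 2 (m i)) :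
    ∃ g : Fin l → (∀ i, ZMod (m i)), ¬ HasWZS ({1, -1} : Set ℤ) g := by
  classical
  obtain ⟨f⟩ : Nonempty (Fin l ↪ (Σ i, Fin (Nat.log 2 (m i)))) :=
    Function.Embedding.nonempty_of_card_le (by simpa using hl)
  refine ⟨fun x => Pi.single (f x).1 (2 ^ ((f x).2 : ℕ)), ?_⟩
  rintro ⟨I, a, ⟨x0, hx0⟩, ha, hsum⟩
  have hfinj : ∀ x y, (f x).1 = (f y).1 → ((f x).2 : ℕ) = (f y).2 → x = y := by
    intro x y h1 h2
    apply f.injective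
    generalize f x = p at *
    generalize f y = q at *
    obtain ⟨p1, p2⟩ := p
    obtain ⟨q1, q2⟩ := q
    obtain rfl : p1 = q1 := h1
    obtain rfl : p2 = q2 := Fin.ext h2
    rfl
  set i0 := (f x0).1 with hi0
  let c : ℕ → ℤ := fun j => ∑ x ∈ I, if (f x).1 = i0 ∧ ((f x).2 : ℕ) = j then a x else 0
  have hcx : ∀ x ∈ I, (f x).1 = i0 → c (f x).2 = a x := by
    intro x hx h
    simp only [c]
    rw [sum_eq_single x]
    · simp [h]
    · intro y _ hy
      rw [if_neg]
      rintro ⟨h1, h2⟩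
      exact hy (hfinj y x (h1.trans h.symm) h2)
    · exact fun h => absurd hx h
  have ha1 : ∀ x ∈ I, |a x| = 1 := by
    intro x hx
    rcases ha x hx with h | h
    · simp [h]
    · rw [Set.mem_singleton_iff] at h
      simp [h]
  have hc : ∀ j, |c j| ≤ 1 := by
    intro j
    by_cases h : ∃ x ∈ I, (f x).1 = i0 ∧ ((f x).2 : ℕ) = j
    · obtain ⟨x, hx, h1, h2⟩ := h
      rw [← h2, hcx x hx h1, ha1 x hx]
    · have : c j = 0 := sum_eq_zero fun x hx => if_neg fun h' => h ⟨x, hx, h'⟩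
      simp [this]
  set k := Nat.log 2 (m i0) with hk
  have hcast : ((∑ j ∈ range k, c j * 2 ^ j : ℤ) : ZMod (m i0)) = 0 := by
    have h0 := congrFun hsum i0
    rw [Finset.sum_apply] at h0
    rw [Pi.zero_apply] at h0
    rw [← h0]
    simp only [c, sum_mul]
    rw [sum_comm, Int.cast_sum]
    refine sum_congr rfl fun x hx => ?_
    by_cases h : (f x).1 = i0
    · have hlt : ((f x).2 : ℕ) < k := by
        exact (f x).2.isLt.trans_eq (congrArg (fun i => Nat.log 2 (m i)) h)
      rw [sum_eq_single ((f x).2 : ℕ)]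
      · have : ∀ (i : Fin t) (n : ℕ), i = i0 →
            (Pi.single i (2 ^ n) : ∀ i, ZMod (m i)) i0 = 2 ^ n := by
          rintro i n rfl
          simp
        simp [h, this _ _ h]
      · intro j _ hj
        rw [if_neg (fun h' => hj h'.2.symm), zero_mul]
      · intro h'
        exact absurd (mem_range.2 hlt) h'
    · have h' : i0 ≠ (f x).1 := fun q => h q.symm
      simp [h, Pi.single_eq_of_ne h']
  have hz : ∑ j ∈ range k, c j * 2 ^ j = 0 := by
    rw [ZMod.intCast_zmod_eq_zero_iff_dvd] at hcast
    apply Int.eq_zero_of_abs_lt_dvd hcast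
    refine (abs_sum_lt_pow c hc k).trans_le ?_
    exact_mod_cast Nat.pow_log_le_self 2 (hm i0).ne'
  have h1 := coeff_zero c hc k hz (f x0).2 (f x0).2.isLt
  rw [hcx x0 hx0 rfl] at h1
  have := ha1 x0 hx0
  simp [h1] at this

theorem stmt0 (G : Type) [AddCommGroup G] [Fintype G] (t : ℕ) (m : Fin t → ℕ)
    (hm : ∀ i, 0 < m i) (e : G ≃+ (∀ i, ZMod (m i))) :
    (∑ i, ⌊Real.logb 2 (m i)⌋) + 1 ≤ (Davpm G : ℤ) ∧
    (Davpm G : ℤ) ≤ ⌊∑ i, Real.logb 2 (m i)⌋ + 1 ∧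
    ⌊∑ i, Real.logb 2 (m i)⌋ = ⌊Real.logb 2 (Fintype.card G)⌋ := by
  have hcard : Fintype.card G = ∏ i, m i := by
    rw [← Nat.card_eq_fintype_card, Nat.card_congr e.toEquiv, Nat.card_pi]
    simp
  have hlog : ∑ i, Real.logb 2 (m i) = Real.logb 2 (Fintype.card G) := by
    rw [hcard, Nat.cast_prod, Real.logb_prod]
    intro i _
    exact_mod_cast (hm i).ne'
  have hmem : (Nat.log 2 (Fintype.card G) + 1) ∈
      {l : ℕ | ∀ g : Fin l → G, HasWZS ({1, -1} : Set ℤ) g} := fun g =>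
    upper_mem G _ (Nat.lt_pow_succ_log_self (by norm_num) _) g
  refine ⟨?_, ?_, by rw [hlog]⟩
  · simp only [floor_logb_nat]
    by_contra hcon
    have hle : Davpm G ≤ ∑ i, Nat.log 2 (m i) := by
      zify
      omega
    obtain ⟨g, hg⟩ := lower_not t m hm _ hle
    have hD : ∀ g : Fin (Davpm G) → G, HasWZS ({1, -1} : Set ℤ) g := Nat.sInf_mem ⟨_, hmem⟩
    obtain ⟨I, a, hI, ha, hs⟩ := hD (fun x => e.symm (g x))
    refine hg ⟨I, a, hI, ha, ?_⟩
    have := congrArg e hs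
    simpa [map_sum, map_zsmul] using this
  · rw [hlog, floor_logb_nat]
    have : Davpm G ≤ Nat.log 2 (Fintype.card G) + 1 := Nat.sInf_le hmem
    exact_mod_cast this
end

section
/- Let G be a finite abelian group with exponent n, let A ⊆ ℤ be a nonempty set, and let d be a positive divisor of n. Then D_{dA}(G) = D_A(dG), where dA = {da : a ∈ A} and dG = {dg : g ∈ G} is the subgroup of G consisting of all d-th multiples. -/
open Finset

/-- The additive homomorphism `g ↦ d • g`; its range is the subgroup `dG`. -/
def scalarHom (d : ℕ) (G : Type*) [AddCommGroup G] : G →+ G :=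
  AddMonoidHom.mk' (fun g => d • g) (fun a b => smul_add d a b)

theorem hasWZS_scale_iff {G : Type} [AddCommGroup G] (A : Set ℤ) (d : ℕ) {ℓ : ℕ}
    (g : Fin ℓ → G) :
    HasWZS ((fun a => (d : ℤ) * a) '' A) g ↔
      HasWZS A (fun i => (scalarHom d G).rangeRestrict (g i)) := by
  have key : ∀ (I : Finset (Fin ℓ)) (b : Fin ℓ → ℤ),
      (∑ i ∈ I, b i • (scalarHom d G).rangeRestrict (g i) = 0) ↔
        ∑ i ∈ I, ((d : ℤ) * b i) • g i = 0 := by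
    intro I b
    rw [← Subtype.coe_inj]
    have h : ∀ i, ((d : ℤ) * b i) • g i = b i • (scalarHom d G (g i)) := by
      intro i
      change _ = b i • (d • g i)
      rw [mul_comm, mul_smul, natCast_zsmul]
    simp [h]
  constructor
  · rintro ⟨I, a, hI, ha, hs⟩
    choose! b hb using ha
    refine ⟨I, b, hI, fun i hi => (hb i hi).1, (key I b).2 ?_⟩
    rw [← hs]
    refine Finset.sum_congr rfl fun i hi => ?_
    have := (hb i hi).2
    simp only at this
    rw [this]
  · rintro ⟨I, b, hI, hb, hs⟩
    exact ⟨I, fun i => (d : ℤ) * b i, hI, fun i hi => ⟨b i, hb i hi, rfl⟩, (key I b).1 hs⟩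

theorem stmt1 (G : Type) [AddCommGroup G] [Fintype G] (A : Set ℤ) (hA : A.Nonempty)
    (d : ℕ) (hd0 : 0 < d) (hd : d ∣ AddMonoid.exponent G) :
    DavW ((fun a => (d : ℤ) * a) '' A) G = DavW A (↥(scalarHom d G).range) := by
  unfold DavW
  congr 1
  ext ℓ
  simp only [Set.mem_setOf_eq, hasWZS_scale_iff]
  constructor
  · intro h g
    choose f hf using fun i => (scalarHom d G).rangeRestrict_surjective (g i)
    have := h f
    simpa only [hf] using this
  · intro h g
    exact h _
end

section
/- Let G be a finite abelian group, let A ⊆ ℤ be a nonempty set, and let b be an integer. Then D_{bA}(G) = D_A(gcd(b, exp(G))·G), where bA = {ba : a ∈ A} and gcd(b, exp(G))·G denotes the subgroup {gcd(b, exp(G))·g : g ∈ G}. -/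
open Finset

theorem hasWZS_image_iff (A : Set ℤ) {G : Type*} [AddCommGroup G] {ℓ : ℕ} (b : ℤ)
    (g : Fin ℓ → G) :
    HasWZS ((fun a => b * a) '' A) g ↔ HasWZS A (fun i => b • g i) := by
  constructor
  · rintro ⟨I, a, hI, ha, hs⟩
    choose! a' ha' using ha
    refine ⟨I, a', hI, fun i hi => (ha' i hi).1, ?_⟩
    rw [← hs]
    refine Finset.sum_congr rfl fun i hi => ?_
    rw [← (ha' i hi).2, smul_smul, mul_comm]
  · rintro ⟨I, a, hI, ha, hs⟩
    refine ⟨I, fun i => b * a i, hI, fun i hi => ⟨a i, ha i hi, rfl⟩, ?_⟩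
    rw [← hs]
    refine Finset.sum_congr rfl fun i hi => ?_
    rw [smul_smul, mul_comm]

theorem hasWZS_coe_iff (A : Set ℤ) {G : Type*} [AddCommGroup G] {ℓ : ℕ} (H : AddSubgroup G)
    (h : Fin ℓ → H) :
    HasWZS A h ↔ HasWZS A (fun i => (h i : G)) := by
  unfold HasWZS
  refine exists_congr fun I => exists_congr fun a => ?_
  rw [Subtype.ext_iff]
  simp

theorem stmt2 (G : Type) [AddCommGroup G] [Fintype G] (A : Set ℤ) (hA : A.Nonempty)
    (b : ℤ) :
    DavW ((fun a => b * a) '' A) G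
      = DavW A (↥(scalarHom (Int.gcd b (AddMonoid.exponent G)) G).range) := by
  unfold DavW
  congr 1
  ext ℓ
  simp only [Set.mem_ofPred_eq]
  constructor
  · intro H h
    rw [hasWZS_coe_iff]
    have key : ∀ i, ∃ g : G, b • g = (h i : G) := by
      intro i
      obtain ⟨g, hg⟩ := (h i).2
      refine ⟨Int.gcdA b (AddMonoid.exponent G) • g, ?_⟩
      rw [← hg]
      change _ = (Int.gcd b (AddMonoid.exponent G)) • g
      rw [← natCast_zsmul, Int.gcd_eq_gcd_ab, add_smul, mul_smul, mul_comm (AddMonoid.exponent G : ℤ),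
        mul_smul _ (AddMonoid.exponent G : ℤ), natCast_zsmul, AddMonoid.exponent_nsmul_eq_zero,
        smul_zero, add_zero]
    choose g hg using key
    have := (hasWZS_image_iff A b g).1 (H g)
    simpa only [hg] using this
  · intro H g
    rw [hasWZS_image_iff]
    obtain ⟨c, hc⟩ := Int.gcd_dvd_left b (AddMonoid.exponent G : ℤ)
    have key : ∀ i, b • g i ∈ (scalarHom (Int.gcd b (AddMonoid.exponent G)) G).range := by
      intro i
      refine ⟨c • g i, ?_⟩
      change (Int.gcd b (AddMonoid.exponent G)) • c • g i = _
      rw [← natCast_zsmul, smul_smul, ← hc]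
    exact (hasWZS_coe_iff A _ _).1 (H fun i => ⟨b • g i, key i⟩)
end

section
/- Let G be a finite abelian group, let H ≤ G be a subgroup, and let A ⊆ ℤ be a nonempty set. Then D_A(G) ≥ D_A(G/H) + D_A(H) − 1. -/
open Finset

theorem HasWZS.of_comp {A : Set ℤ} {G : Type*} [AddCommGroup G] {k l : ℕ} (g : Fin l → G)
    (e : Fin k ↪ Fin l) (h : HasWZS A (fun i => g (e i))) : HasWZS A g := by
  obtain ⟨I, a, hI, ha, hs⟩ := h
  refine ⟨I.map e, Function.extend e a 0, hI.map, ?_, ?_⟩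
  · intro i hi
    obtain ⟨j, hj, rfl⟩ := Finset.mem_map.1 hi
    rw [e.injective.extend_apply]
    exact ha j hj
  · rw [Finset.sum_map, ← hs]
    refine Finset.sum_congr rfl fun i _ => ?_
    rw [e.injective.extend_apply]

theorem davW_nonempty (A : Set ℤ) (hA : A.Nonempty) (G : Type*) [AddCommGroup G] [Finite G] :
    {ℓ : ℕ | ∀ g : Fin ℓ → G, HasWZS A g}.Nonempty := by
  classical
  have := Fintype.ofFinite G
  obtain ⟨c, hc⟩ := hA
  refine ⟨Fintype.card G, fun g => ?_⟩
  let S : Fin (Fintype.card G + 1) → G :=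
    fun k => ∑ i ∈ Finset.univ.filter (fun i : Fin (Fintype.card G) => i.val < k.val), c • g i
  obtain ⟨x, y, hxy, hS⟩ := Fintype.exists_ne_map_eq_of_card_lt S (by simp)
  wlog hlt : x < y generalizing x y
  · exact this y x hxy.symm hS.symm (lt_of_le_of_ne (not_lt.1 hlt) hxy.symm)
  have hlt' : x.val < y.val := hlt
  refine ⟨(Finset.univ.filter (fun i : Fin (Fintype.card G) => i.val < y.val)) \
    (Finset.univ.filter (fun i : Fin (Fintype.card G) => i.val < x.val)), fun _ => c,
    ⟨⟨x.val, by omega⟩, by simp [hlt']⟩, fun _ _ => hc, ?_⟩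
  rw [Finset.sum_sdiff_eq_sub]
  · exact sub_eq_zero.2 hS.symm
  · intro i hi
    simp only [Finset.mem_filter, Finset.mem_univ, true_and] at hi ⊢
    omega

theorem davW_pos (A : Set ℤ) (hA : A.Nonempty) (G : Type*) [AddCommGroup G] [Finite G] :
    0 < DavW A G := by
  rcases Nat.eq_zero_or_pos (DavW A G) with h | h
  · have hm := Nat.sInf_mem (davW_nonempty A hA G)
    change ∀ g : Fin (DavW A G) → G, HasWZS A g at hm
    rw [h] at hm
    obtain ⟨I, _, ⟨i, _⟩, _⟩ := hm (fun _ => 0)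
    exact i.elim0
  · exact h

theorem exists_no_wzs (A : Set ℤ) (hA : A.Nonempty) (G : Type*) [AddCommGroup G] [Finite G] :
    ∃ g : Fin (DavW A G - 1) → G, ¬ HasWZS A g := by
  have hp := davW_pos A hA G
  have h : DavW A G - 1 ∉ {ℓ : ℕ | ∀ g : Fin ℓ → G, HasWZS A g} :=
    Nat.notMem_of_lt_sInf (show DavW A G - 1 < DavW A G by omega)
  simpa using h

theorem no_wzs_append (A : Set ℤ) {G : Type*} [AddCommGroup G] (H : AddSubgroup G) {m n : ℕ}
    (g : Fin m → G) (h : Fin n → H) (hg : ¬ HasWZS A (fun i => (g i : G ⧸ H)))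
    (hh : ¬ HasWZS A h) : ¬ HasWZS A (Fin.append g (fun i => (h i : G))) := by
  classical
  rintro ⟨I, a, hI, ha, hs⟩
  have hs' : ∑ i ∈ Finset.univ.filter (fun i => Fin.castAdd n i ∈ I), a (Fin.castAdd n i) • g i
      + ∑ i ∈ Finset.univ.filter (fun i => Fin.natAdd m i ∈ I),
        a (Fin.natAdd m i) • (h i : G) = 0 := by
    rw [← hs, Finset.sum_filter, Finset.sum_filter,
      ← Finset.univ_inter I, ← Finset.sum_ite_mem,
      Fin.sum_univ_add]
    simp
  have h1 : Finset.univ.filter (fun i => Fin.castAdd n i ∈ I) = ∅ := by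
    by_contra hne
    refine hg ⟨_, fun i => a (Fin.castAdd n i), Finset.nonempty_iff_ne_empty.2 hne,
      fun i hi => ha _ (by simpa using hi), ?_⟩
    have := congrArg (QuotientAddGroup.mk' H) hs'
    rw [map_add, map_sum, map_sum, map_zero] at this
    have h0 : ∀ i, (QuotientAddGroup.mk' H) (a (Fin.natAdd m i) • (h i : G)) = 0 := fun i =>
      (QuotientAddGroup.eq_zero_iff _).2 (H.zsmul_mem (h i).2 _)
    simpa [h0] using this
  rw [h1, Finset.sum_empty, zero_add] at hs'
  refine hh ⟨Finset.univ.filter (fun i => Fin.natAdd m i ∈ I), fun i => a (Fin.natAdd m i),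
    ?_, fun i hi => ha _ (by simpa using hi), ?_⟩
  · obtain ⟨i, hi⟩ := hI
    induction i using Fin.addCases with
    | left i =>
      have : i ∈ Finset.univ.filter (fun i => Fin.castAdd n i ∈ I) := by simpa using hi
      rw [h1] at this
      simp at this
    | right i => exact ⟨i, by simpa using hi⟩
  · apply Subtype.ext
    rw [← AddSubgroup.coe_zero H] at hs'
    simpa using hs'

theorem stmt3 (G : Type) [AddCommGroup G] [Fintype G] (A : Set ℤ) (hA : A.Nonempty)
    (H : AddSubgroup G) :
    (DavW A (G ⧸ H) : ℤ) + (DavW A ↥H : ℤ) - 1 ≤ (DavW A G : ℤ) := by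
  obtain ⟨q, hq⟩ := exists_no_wzs A hA (G ⧸ H)
  obtain ⟨h, hh⟩ := exists_no_wzs A hA H
  have hp1 := davW_pos A hA (G ⧸ H)
  have hp2 := davW_pos A hA H
  choose g hg using fun i => QuotientAddGroup.mk_surjective (q i)
  have hno := no_wzs_append A H g h (by simpa only [hg] using hq) hh
  by_contra hlt
  have hle : DavW A G ≤ (DavW A (G ⧸ H) - 1) + (DavW A H - 1) := by omega
  have hm : ∀ g : Fin (DavW A G) → G, HasWZS A g := Nat.sInf_mem (davW_nonempty A hA G)
  exact hno (HasWZS.of_comp _ (Fin.castLEEmb hle) (hm _))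
end

section
/- Let H_1, H_2 be finite abelian groups such that D_±(H_i) = ⌊log₂ |H_i|⌋ + 1 for i = 1, 2 and such that {log₂ |H_1|} + {log₂ |H_2|} < 1, where {x} denotes the fractional part of x. Then for every finite abelian group G that is an extension of H_1 by H_2 (i.e., G has a subgroup H isomorphic to H_2 with G/H isomorphic to H_1), one has D_±(G) = ⌊log₂ |G|⌋ + 1. In particular, if G has a subgroup H such that D_±(H) = ⌊log₂ |H|⌋ + 1 and G/H is a 2-group, then D_±(G) = ⌊log₂ |G|⌋ + 1. -/
open Finset

/-- No nontrivial `{0, 1, -1}`-combination of the family vanishes. -/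
def Dis {G : Type} [AddCommGroup G] {ι : Type} [Fintype ι] (g : ι → G) : Prop :=
  ∀ c : ι → ℤ, (∀ i, c i = 0 ∨ c i = 1 ∨ c i = -1) → ∑ i, c i • g i = 0 → ∀ i, c i = 0

lemma hasWZS_iff {G : Type} [AddCommGroup G] {l : ℕ} (g : Fin l → G) :
    HasWZS ({1, -1} : Set ℤ) g ↔ ¬ Dis g := by
  classical
  constructor
  · rintro ⟨I, a, ⟨j, hj⟩, ha, hs⟩ hd
    have := hd (fun i => if i ∈ I then a i else 0) (by
      intro i
      by_cases hi : i ∈ I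
      · have := ha i hi
        simp at this
        simp [hi, this]
      · simp [hi]) (by
      rw [← hs]
      simp [ite_smul, Finset.sum_ite_mem]) j
    simp [hj] at this
    have h2 := ha j hj
    simp [this] at h2
  · intro h
    unfold Dis at h
    push Not at h
    obtain ⟨c, hc, hs, j, hj⟩ := h
    refine ⟨Finset.univ.filter (fun i => c i ≠ 0), c, ⟨j, by simp [hj]⟩, ?_, ?_⟩
    · intro i hi
      simp at hi
      have := hc i
      simp
      tauto
    · rw [← hs, Finset.sum_filter]
      apply Finset.sum_congr rfl
      intro i _
      by_cases hi : c i = 0 <;> simp [hi]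

lemma Dis.comp {G : Type} [AddCommGroup G] {ι κ : Type} [Fintype ι] [Fintype κ]
    {g : ι → G} (h : Dis g) (f : κ → ι) (hf : Function.Injective f) : Dis (g ∘ f) := by
  classical
  intro c hc hs k
  have := h (Function.extend f c 0) (by
    intro i
    by_cases hi : ∃ k, f k = i
    · obtain ⟨k, rfl⟩ := hi
      rw [hf.extend_apply]
      exact hc k
    · rw [Function.extend_apply' _ _ _ hi]
      simp) (by
    rw [← hs]
    symm
    apply Finset.sum_of_injOn f hf.injOn (by simp)
    · intro i _ hi
      rw [Function.extend_apply' _ _ _ (by simpa using hi)]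
      simp
    · intro i _
      simp [hf.extend_apply]) (f k)
  rwa [hf.extend_apply] at this

lemma Dis.map {G K : Type} [AddCommGroup G] [AddCommGroup K] {ι : Type} [Fintype ι]
    {g : ι → G} (h : Dis g) (f : G →+ K) (hf : Function.Injective f) :
    Dis (fun i => f (g i)) := by
  intro c hc hs
  apply h c hc
  apply hf
  simpa using hs

lemma Dis.card_le {G : Type} [AddCommGroup G] [Finite G] {ι : Type} [Fintype ι]
    {g : ι → G} (h : Dis g) : 2 ^ Fintype.card ι ≤ Nat.card G := by
  classical
  have hinj : Function.Injective (fun S : Finset ι => ∑ i ∈ S, g i) := by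
    intro S T hST
    have hh := h (fun i => (if i ∈ S then 1 else 0) - (if i ∈ T then 1 else 0)) (by
      intro i
      by_cases h1 : i ∈ S <;> by_cases h2 : i ∈ T <;> simp [h1, h2]) (by
      simp only [sub_smul, ite_smul, one_smul, zero_smul, Finset.sum_sub_distrib,
        Finset.sum_ite_mem, Finset.univ_inter]
      exact sub_eq_zero.2 hST)
    ext i
    have := hh i
    by_cases h1 : i ∈ S <;> by_cases h2 : i ∈ T <;> simp [h1, h2] at this ⊢
  have := Nat.card_le_card_of_injective _ hinj
  simpa [Nat.card_eq_fintype_card] using this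

lemma Dis.extension {G : Type} [AddCommGroup G] (H : AddSubgroup G) {ι κ : Type}
    [Fintype ι] [Fintype κ] {g : ι → G ⧸ H} {k : κ → H} (hg : Dis g) (hk : Dis k) :
    ∃ f : ι ⊕ κ → G, Dis f := by
  choose s hs using fun i => QuotientAddGroup.mk'_surjective H (g i)
  refine ⟨Sum.elim s (fun j => (k j : G)), ?_⟩
  intro c hc hsum
  rw [Fintype.sum_sum_type] at hsum
  simp only [Sum.elim_inl, Sum.elim_inr] at hsum
  have h1 : ∀ i, c (Sum.inl i) = 0 := by
    apply hg (fun i => c (Sum.inl i)) (fun i => hc _)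
    have := congrArg (QuotientAddGroup.mk' H) hsum
    rw [map_add, map_sum, map_sum, map_zero] at this
    simp only [map_zsmul, hs] at this
    rw [Finset.sum_eq_zero (s := (Finset.univ : Finset κ)), add_zero] at this
    · exact this
    · intro j _
      have : (QuotientAddGroup.mk' H) (k j : G) = 0 :=
        (QuotientAddGroup.eq_zero_iff _).2 (k j).2
      rw [this, smul_zero]
  have h2 : ∀ j, c (Sum.inr j) = 0 := by
    apply hk (fun j => c (Sum.inr j)) (fun j => hc _)
    simp only [h1, zero_smul, Finset.sum_const_zero, zero_add] at hsum
    apply Subtype.ext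
    simpa using hsum
  rintro (i | j)
  · exact h1 i
  · exact h2 j

lemma lt_davpm_iff {G : Type} [AddCommGroup G] [Finite G] (n : ℕ) :
    n < Davpm G ↔ ∃ g : Fin n → G, Dis g := by
  constructor
  · intro h
    have := Nat.notMem_of_lt_sInf h
    simp only [Set.mem_setOf_eq, hasWZS_iff] at this
    push Not at this
    exact this
  · rintro ⟨g, hg⟩
    have hne : {l : ℕ | ∀ g : Fin l → G, HasWZS ({1, -1} : Set ℤ) g}.Nonempty := by
      refine ⟨Nat.card G, fun g => (hasWZS_iff g).2 fun hd => ?_⟩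
      have := hd.card_le
      rw [Fintype.card_fin] at this
      exact absurd this (not_le.2 Nat.lt_two_pow_self)
    have hm := Nat.sInf_mem hne
    by_contra hlt
    have hle : Davpm G ≤ n := not_lt.1 hlt
    exact (hasWZS_iff _).1 (hm (g ∘ Fin.castLE hle)) (hg.comp _ (Fin.castLE_injective hle))

lemma davpm_le {G : Type} [AddCommGroup G] [Finite G] :
    Davpm G ≤ Nat.log 2 (Nat.card G) + 1 := by
  by_contra h
  obtain ⟨g, hg⟩ := (lt_davpm_iff _).1 (not_le.1 h)
  have := hg.card_le
  rw [Fintype.card_fin] at this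
  have h2 := Nat.lt_pow_succ_log_self (b := 2) (by norm_num) (Nat.card G)
  omega

lemma floor_logb_card (G : Type) : ⌊Real.logb 2 (Nat.card G)⌋ = (Nat.log 2 (Nat.card G) : ℤ) := by
  have := Real.floor_logb_natCast (b := 2) (r := (Nat.card G : ℝ)) (by positivity)
  rw [Int.log_natCast] at this
  exact_mod_cast this

lemma main_ext {G : Type} [AddCommGroup G] [Finite G] (H : AddSubgroup G) {m n : ℕ}
    {g : Fin m → G ⧸ H} {k : Fin n → H} (hg : Dis g) (hk : Dis k) : ∃ f : Fin (m + n) → G, Dis f := by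
  obtain ⟨f, hf⟩ := Dis.extension H hg hk
  exact ⟨_, hf.comp finSumFinEquiv.symm finSumFinEquiv.symm.injective⟩

lemma two_group (k : ℕ) : ∀ (G : Type) [AddCommGroup G] [Finite G], Nat.card G = 2 ^ k →
    ∃ f : Fin k → G, Dis f := by
  induction k with
  | zero =>
    intro G _ _ _
    exact ⟨fun i => i.elim0, fun c _ _ i => i.elim0⟩
  | succ k ih =>
    intro G _ _ hG
    obtain ⟨x, hx⟩ := exists_prime_addOrderOf_dvd_card' (G := G) 2 (by rw [hG]; simp [pow_succ])
    have hc : Nat.card (AddSubgroup.zmultiples x) = 2 := by rw [Nat.card_zmultiples, hx]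
    have hq := AddSubgroup.card_eq_card_quotient_mul_card_addSubgroup (AddSubgroup.zmultiples x)
    rw [hc, hG, pow_succ] at hq
    obtain ⟨g, hg⟩ := ih (G ⧸ AddSubgroup.zmultiples x) (by omega)
    have hk : Dis (fun _ : Fin 1 => (⟨x, AddSubgroup.mem_zmultiples x⟩ :
        AddSubgroup.zmultiples x)) := by
      intro c hc hs i
      have hx0 : x ≠ 0 := by
        rintro rfl
        simp at hx
      have hs' := congrArg Subtype.val hs
      have hi : i = 0 := Subsingleton.elim _ _
      subst hi
      rcases hc 0 with h | h | h
      · exact h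
      · simp [h, hx0] at hs'
      · simp [h, hx0] at hs'
    exact main_ext _ hg hk

lemma part1 (H1 H2 : Type) [AddCommGroup H1] [AddCommGroup H2] [Finite H1] [Finite H2]
    (h1 : (Davpm H1 : ℤ) = ⌊Real.logb 2 (Nat.card H1)⌋ + 1)
    (h2 : (Davpm H2 : ℤ) = ⌊Real.logb 2 (Nat.card H2)⌋ + 1)
    (hf : Int.fract (Real.logb 2 (Nat.card H1)) + Int.fract (Real.logb 2 (Nat.card H2)) < 1)
    (G : Type) [AddCommGroup G] [Finite G] (H : AddSubgroup G)
    (e2 : ↥H ≃+ H2) (e1 : (G ⧸ H) ≃+ H1) :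
    (Davpm G : ℤ) = ⌊Real.logb 2 (Nat.card G)⌋ + 1 := by
  have hcard : Nat.card G = Nat.card H1 * Nat.card H2 := by
    rw [AddSubgroup.card_eq_card_quotient_mul_card_addSubgroup H, Nat.card_congr e1.toEquiv,
      Nat.card_congr e2.toEquiv]
  have hlog : ⌊Real.logb 2 (Nat.card G)⌋ =
      ⌊Real.logb 2 (Nat.card H1)⌋ + ⌊Real.logb 2 (Nat.card H2)⌋ := by
    rw [hcard, Nat.cast_mul, Real.logb_mul (by simp [Nat.card_pos.ne'])
      (by simp [Nat.card_pos.ne'])]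
    have a1 := Int.floor_add_fract (Real.logb 2 (Nat.card H1))
    have a2 := Int.floor_add_fract (Real.logb 2 (Nat.card H2))
    have b1 := Int.fract_nonneg (Real.logb 2 (Nat.card H1))
    have b2 := Int.fract_nonneg (Real.logb 2 (Nat.card H2))
    rw [Int.floor_eq_iff]
    push_cast
    constructor <;> linarith
  have hub := davpm_le (G := G)
  rw [floor_logb_card, floor_logb_card, floor_logb_card] at hlog
  rw [floor_logb_card] at h1 h2 ⊢
  obtain ⟨g, hg⟩ := (lt_davpm_iff (G := H1) (Nat.log 2 (Nat.card H1))).1 (by omega)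
  obtain ⟨k, hk⟩ := (lt_davpm_iff (G := H2) (Nat.log 2 (Nat.card H2))).1 (by omega)
  have hlb := (lt_davpm_iff _).2 (main_ext H (hg.map e1.symm.toAddMonoidHom e1.symm.injective)
    (hk.map e2.symm.toAddMonoidHom e2.symm.injective))
  omega

theorem stmt4 :
    (∀ (H1 H2 : Type) [AddCommGroup H1] [AddCommGroup H2] [Fintype H1] [Fintype H2],
      (Davpm H1 : ℤ) = ⌊Real.logb 2 (Nat.card H1)⌋ + 1 →
      (Davpm H2 : ℤ) = ⌊Real.logb 2 (Nat.card H2)⌋ + 1 →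
      Int.fract (Real.logb 2 (Nat.card H1)) + Int.fract (Real.logb 2 (Nat.card H2)) < 1 →
      ∀ (G : Type) [AddCommGroup G] [Fintype G] (H : AddSubgroup G),
        Nonempty (↥H ≃+ H2) → Nonempty ((G ⧸ H) ≃+ H1) →
        (Davpm G : ℤ) = ⌊Real.logb 2 (Nat.card G)⌋ + 1) ∧
    (∀ (G : Type) [AddCommGroup G] [Fintype G] (H : AddSubgroup G),
      (Davpm ↥H : ℤ) = ⌊Real.logb 2 (Nat.card ↥H)⌋ + 1 →
      (∃ k : ℕ, Nat.card (G ⧸ H) = 2 ^ k) →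
      (Davpm G : ℤ) = ⌊Real.logb 2 (Nat.card G)⌋ + 1) := by
  refine ⟨?_, ?_⟩
  · intro H1 H2 _ _ _ _ h1 h2 hf G _ _ H ⟨e2⟩ ⟨e1⟩
    exact part1 H1 H2 h1 h2 hf G H e2 e1
  · rintro G _ _ H hH ⟨k, hk⟩
    have hl : Real.logb 2 (Nat.card (G ⧸ H)) = k := by
      rw [hk, Nat.cast_pow, Real.logb_pow]
      simp
    refine part1 (G ⧸ H) H ?_ hH ?_ G H (AddEquiv.refl _) (AddEquiv.refl _)
    · have hlb := (lt_davpm_iff _).2 (two_group k (G ⧸ H) hk)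
      have hub := davpm_le (G := G ⧸ H)
      rw [hk, Nat.log_pow (by norm_num)] at hub
      rw [hl, Int.floor_natCast]
      omega
    · rw [hl, Int.fract_natCast, zero_add]
      exact Int.fract_lt_one _
end

section
/- Let n, m_1, m_2 be pairwise coprime positive integers such that {log₂ m_i} + {log₂ n} ≥ 1 for each i ∈ {1, 2} and {log₂ m_1} + {log₂ m_2} + 2{log₂ n} < 3. Then D*_±(C_n ⊕ C_{n m_1 m_2}) = D_±(C_n ⊕ C_{n m_1 m_2}) = ⌊log₂(n² m_1 m_2)⌋ + 1. -/
open Finset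

/-- `D*₊₋(G)`: the maximum of `∑ i, ⌊log₂ m i⌋ + 1` over all ways of writing `G` as a
direct sum of cyclic groups of orders `m 1, …, m t`. -/
noncomputable def DavStarPM (G : Type*) [AddCommGroup G] : ℕ :=
  sSup {k : ℕ | ∃ (t : ℕ) (m : Fin t → ℕ), (∀ i, 0 < m i) ∧
    Nonempty (G ≃+ (∀ i, ZMod (m i))) ∧ k = (∑ i, Nat.log 2 (m i)) + 1}

theorem aux_ne {ι : Type*} [DecidableEq ι] (J : Finset ι) (e : ι → ℕ) (c : ι → ℤ) (a M : ℕ)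
    (hM : 2 ^ a ≤ M) (he : Set.InjOn e J) (hea : ∀ i ∈ J, e i < a)
    (hc : ∀ i ∈ J, c i = 1 ∨ c i = -1)
    (h : (M : ℤ) ∣ ∑ i ∈ J, c i * 2 ^ e i) : J = ∅ := by
  have key : ∀ (K : Finset ι) (b : ℕ), K ⊆ J → (∀ i ∈ K, e i < b) →
      |∑ i ∈ K, c i * (2 : ℤ) ^ e i| < 2 ^ b := by
    intro K b hK hb
    have h1 : ∑ i ∈ K, 2 ^ e i < 2 ^ b := by
      have := Nat.geomSum_lt (m := 2) (n := b) (s := K.image e) le_rfl (by simpa using hb)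
      rwa [Finset.sum_image (fun x hx y hy hxy => he (hK hx) (hK hy) hxy)] at this
    have h2 : |∑ i ∈ K, c i * (2 : ℤ) ^ e i| ≤ ∑ i ∈ K, (2 : ℤ) ^ e i := by
      refine (Finset.abs_sum_le_sum_abs _ _).trans (Finset.sum_le_sum fun i hi => ?_)
      rcases hc i (hK hi) with h | h <;> simp [h]
    refine h2.trans_lt ?_
    exact_mod_cast h1
  have h0 : ∑ i ∈ J, c i * (2 : ℤ) ^ e i = 0 := by
    refine Int.eq_zero_of_abs_lt_dvd h ((key J a subset_rfl hea).trans_le ?_)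
    exact_mod_cast hM
  by_contra hne
  obtain ⟨k, hk, hmax⟩ := Finset.exists_max_image J e (Finset.nonempty_iff_ne_empty.2 hne)
  have h3 := key (J.erase k) (e k) (Finset.erase_subset _ _) (by
    intro i hi
    have hi' := Finset.mem_erase.1 hi
    exact lt_of_le_of_ne (hmax i hi'.2) (fun hh => hi'.1 (he hi'.2 hk hh)))
  rw [← Finset.add_sum_erase _ _ hk] at h0
  rw [abs_lt] at h3
  rcases hc k hk with h | h <;> rw [h] at h0 <;> linarith [h3.1, h3.2]

theorem aux_lower {G : Type*} [AddCommGroup G] (N1 N2 : ℕ) (h1 : 0 < N1) (h2 : 0 < N2)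
    (φ : G ≃+ ZMod N1 × ZMod N2) (ℓ : ℕ) (hℓ : ℓ ≤ Nat.log 2 N1 + Nat.log 2 N2) :
    ∃ g : Fin ℓ → G, ¬ HasWZS ({1, -1} : Set ℤ) g := by
  set a := Nat.log 2 N1
  set b := Nat.log 2 N2
  have ha : 2 ^ a ≤ N1 := Nat.pow_log_le_self 2 h1.ne'
  have hb : 2 ^ b ≤ N2 := Nat.pow_log_le_self 2 h2.ne'
  refine ⟨fun i => φ.symm (if (i : ℕ) < a then (((2 ^ (i : ℕ) : ℤ) : ZMod N1), 0)
    else (0, ((2 ^ ((i : ℕ) - a) : ℤ) : ZMod N2))), ?_⟩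
  rintro ⟨I, c, hI, hc, hs⟩
  have hs' := congrArg φ hs
  simp only [map_sum, map_zsmul, AddEquiv.apply_symm_apply, map_zero] at hs'
  have hc' : ∀ i ∈ I, c i = 1 ∨ c i = -1 := fun i hi => by simpa using hc i hi
  have e1 : I.filter (fun i : Fin ℓ => (i : ℕ) < a) = ∅ := by
    refine aux_ne _ (fun i : Fin ℓ => (i : ℕ)) c a N1 ha (fun x _ y _ h => Fin.ext h)
      (fun i hi => (Finset.mem_filter.1 hi).2) (fun i hi => hc' i (Finset.mem_filter.1 hi).1) ?_
    rw [← ZMod.intCast_zmod_eq_zero_iff_dvd _ N1 |>.trans Iff.rfl]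
    have := congrArg Prod.fst hs'
    rw [Prod.fst_sum] at this
    rw [Finset.sum_filter, Int.cast_sum]
    rw [Prod.fst_zero] at this
    rw [← this]
    refine Finset.sum_congr rfl fun i _ => ?_
    split_ifs <;> simp
  have e2 : I.filter (fun i : Fin ℓ => ¬ (i : ℕ) < a) = ∅ := by
    refine aux_ne _ (fun i : Fin ℓ => (i : ℕ) - a) c b N2 hb ?_ ?_
      (fun i hi => hc' i (Finset.mem_filter.1 hi).1) ?_
    · intro x hx y hy h
      have hx := (Finset.mem_filter.1 hx).2
      have hy := (Finset.mem_filter.1 hy).2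
      simp only at h
      apply Fin.ext
      omega
    · intro i hi
      have hx := (Finset.mem_filter.1 hi).2
      have := i.2
      omega
    rw [← ZMod.intCast_zmod_eq_zero_iff_dvd _ N2 |>.trans Iff.rfl]
    have := congrArg Prod.snd hs'
    rw [Prod.snd_sum] at this
    rw [Finset.sum_filter, Int.cast_sum]
    rw [Prod.snd_zero] at this
    rw [← this]
    refine Finset.sum_congr rfl fun i _ => ?_
    split_ifs <;> simp
  obtain ⟨i, hi⟩ := hI
  by_cases hia : (i : ℕ) < a
  · have : i ∈ I.filter (fun i : Fin ℓ => (i : ℕ) < a) := Finset.mem_filter.2 ⟨hi, hia⟩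
    rw [e1] at this
    simp at this
  · have : i ∈ I.filter (fun i : Fin ℓ => ¬ (i : ℕ) < a) := Finset.mem_filter.2 ⟨hi, hia⟩
    rw [e2] at this
    simp at this

theorem aux_upper {G : Type*} [AddCommGroup G] [Finite G] (ℓ : ℕ) (h : Nat.card G < 2 ^ ℓ)
    (g : Fin ℓ → G) : HasWZS ({1, -1} : Set ℤ) g := by
  classical
  have := Fintype.ofFinite G
  rw [Nat.card_eq_fintype_card] at h
  obtain ⟨S, T, hne, hST⟩ := Fintype.exists_ne_map_eq_of_card_lt
    (fun S : Finset (Fin ℓ) => ∑ i ∈ S, g i) (by simpa using h)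
  refine ⟨(S \ T) ∪ (T \ S), fun i => if i ∈ S then 1 else -1, ?_, ?_, ?_⟩
  · rw [Finset.nonempty_iff_ne_empty]
    intro h0
    rw [Finset.union_eq_empty, Finset.sdiff_eq_empty_iff_subset,
      Finset.sdiff_eq_empty_iff_subset] at h0
    exact hne (h0.1.antisymm h0.2)
  · intro i _
    simp only
    split_ifs <;> simp
  · rw [Finset.sum_union disjoint_sdiff_sdiff]
    have e1 : ∑ i ∈ S \ T, (if i ∈ S then (1 : ℤ) else -1) • g i = ∑ i ∈ S \ T, g i :=
      Finset.sum_congr rfl fun i hi => by simp [(Finset.mem_sdiff.1 hi).1]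
    have e2 : ∑ i ∈ T \ S, (if i ∈ S then (1 : ℤ) else -1) • g i = - ∑ i ∈ T \ S, g i := by
      rw [← Finset.sum_neg_distrib]
      exact Finset.sum_congr rfl fun i hi => by simp [(Finset.mem_sdiff.1 hi).2]
    rw [e1, e2, ← sub_eq_add_neg, Finset.sum_sdiff_sub_sum_sdiff, hST, sub_self]

theorem aux_log_sum {t : ℕ} (m : Fin t → ℕ) (hm : ∀ i, 0 < m i) :
    ∑ i, Nat.log 2 (m i) ≤ Nat.log 2 (∏ i, m i) := by
  apply Nat.le_log_of_pow_le (by norm_num)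
  rw [← Finset.prod_pow_eq_pow_sum]
  exact Finset.prod_le_prod' fun i _ => Nat.pow_log_le_self 2 (hm i).ne'

theorem aux_main {G : Type*} [AddCommGroup G] (N1 N2 : ℕ) (h1 : 0 < N1) (h2 : 0 < N2)
    (φ : G ≃+ ZMod N1 × ZMod N2) (hlog : Nat.log 2 (N1 * N2) ≤ Nat.log 2 N1 + Nat.log 2 N2) :
    DavStarPM G = Nat.log 2 (N1 * N2) + 1 ∧ Davpm G = Nat.log 2 (N1 * N2) + 1 := by
  have : NeZero N1 := ⟨h1.ne'⟩
  have : NeZero N2 := ⟨h2.ne'⟩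
  have hfin : Finite G := Finite.of_equiv _ φ.symm.toEquiv
  have hcard : Nat.card G = N1 * N2 := by
    rw [Nat.card_congr φ.toEquiv]; simp
  have hlog' : Nat.log 2 (N1 * N2) = Nat.log 2 N1 + Nat.log 2 N2 := by
    refine hlog.antisymm ?_
    apply Nat.le_log_of_pow_le (by norm_num)
    rw [pow_add]
    exact Nat.mul_le_mul (Nat.pow_log_le_self 2 h1.ne') (Nat.pow_log_le_self 2 h2.ne')
  constructor
  · refine IsGreatest.csSup_eq ⟨?_, ?_⟩
    · refine ⟨2, ![N1, N2], ?_, ⟨φ.trans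
        (RingEquiv.piFinTwo (fun i => ZMod (![N1, N2] i))).symm.toAddEquiv⟩, ?_⟩
      · intro i; fin_cases i <;> simpa
      · simp [hlog']
    · rintro k ⟨t, m, hm, ⟨ψ⟩, rfl⟩
      have : Nat.card G = ∏ i, m i := by
        rw [Nat.card_congr ψ.toEquiv, Nat.card_pi]; simp
      rw [← hcard, this]
      exact Nat.succ_le_succ (aux_log_sum m hm)
  · refine IsLeast.csInf_eq ⟨?_, ?_⟩
    · intro g
      apply aux_upper
      rw [hcard]
      exact Nat.lt_pow_succ_log_self (by norm_num) _
    · intro ℓ hℓ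
      by_contra hlt
      obtain ⟨g, hg⟩ := aux_lower N1 N2 h1 h2 φ ℓ (by omega)
      exact hg (hℓ g)

theorem aux_floor (x : ℕ) : ⌊Real.logb 2 (x : ℝ)⌋ = (Nat.log 2 x : ℤ) := by
  have := Real.floor_logb_natCast (b := 2) (r := (x : ℝ)) (Nat.cast_nonneg x)
  rw [Int.log_natCast] at this
  exact_mod_cast this

theorem stmt6 (n m1 m2 : ℕ) (hn : 0 < n) (hm1 : 0 < m1) (hm2 : 0 < m2)
    (h12 : Nat.Coprime m1 m2) (hn1 : Nat.Coprime n m1) (hn2 : Nat.Coprime n m2)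
    (hfr1 : 1 ≤ Int.fract (Real.logb 2 m1) + Int.fract (Real.logb 2 n))
    (hfr2 : 1 ≤ Int.fract (Real.logb 2 m2) + Int.fract (Real.logb 2 n))
    (hsum : Int.fract (Real.logb 2 m1) + Int.fract (Real.logb 2 m2)
        + 2 * Int.fract (Real.logb 2 n) < 3) :
    DavStarPM (ZMod n × ZMod (n * m1 * m2)) = Davpm (ZMod n × ZMod (n * m1 * m2)) ∧
    (Davpm (ZMod n × ZMod (n * m1 * m2)) : ℤ)
      = ⌊Real.logb 2 ((n : ℝ) ^ 2 * m1 * m2)⌋ + 1 := by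
  have r0 : (n : ℝ) ≠ 0 := by positivity
  have r1 : (m1 : ℝ) ≠ 0 := by positivity
  have r2 : (m2 : ℝ) ≠ 0 := by positivity
  have l1 : Real.logb 2 ((n * m1 : ℕ) : ℝ) = Real.logb 2 n + Real.logb 2 m1 := by
    push_cast; exact Real.logb_mul r0 r1
  have l2 : Real.logb 2 ((n * m2 : ℕ) : ℝ) = Real.logb 2 n + Real.logb 2 m2 := by
    push_cast; exact Real.logb_mul r0 r2
  have l3 : Real.logb 2 ((n * m1 * (n * m2) : ℕ) : ℝ)
      = Real.logb 2 ((n * m1 : ℕ) : ℝ) + Real.logb 2 ((n * m2 : ℕ) : ℝ) := by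
    rw [Nat.cast_mul]
    exact Real.logb_mul (by push_cast; positivity) (by push_cast; positivity)
  have cop : Nat.Coprime (n * m1) m2 := Nat.Coprime.mul_left hn2 h12
  let φ : ZMod n × ZMod (n * m1 * m2) ≃+ ZMod (n * m1) × ZMod (n * m2) :=
    (((AddEquiv.refl (ZMod n)).prodCongr (ZMod.chineseRemainder cop).toAddEquiv).trans
      { toFun := fun p => (p.2.1, (p.1, p.2.2))
        invFun := fun p => (p.2.1, (p.1, p.2.2))
        left_inv := fun _ => rfl
        right_inv := fun _ => rfl
        map_add' := fun _ _ => rfl }).trans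
      ((AddEquiv.refl (ZMod (n * m1))).prodCongr (ZMod.chineseRemainder hn2).symm.toAddEquiv)
  have b1 : (Nat.log 2 n : ℤ) + Nat.log 2 m1 + 1 ≤ Nat.log 2 (n * m1) := by
    rw [← aux_floor (n * m1), Int.le_floor, l1, ← aux_floor, ← aux_floor]
    push_cast
    unfold Int.fract at hfr1
    linarith
  have b2 : (Nat.log 2 n : ℤ) + Nat.log 2 m2 + 1 ≤ Nat.log 2 (n * m2) := by
    rw [← aux_floor (n * m2), Int.le_floor, l2, ← aux_floor, ← aux_floor]
    push_cast
    unfold Int.fract at hfr2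
    linarith
  have b3 : (Nat.log 2 (n * m1 * (n * m2)) : ℤ)
      < 2 * Nat.log 2 n + Nat.log 2 m1 + Nat.log 2 m2 + 3 := by
    rw [← aux_floor (n * m1 * (n * m2)), Int.floor_lt, l3, l1, l2, ← aux_floor, ← aux_floor,
      ← aux_floor]
    push_cast
    unfold Int.fract at hsum
    linarith
  obtain ⟨hA, hB⟩ := aux_main (n * m1) (n * m2) (by positivity) (by positivity) φ (by omega)
  refine ⟨hA.trans hB.symm, ?_⟩
  have e : (n : ℝ) ^ 2 * m1 * m2 = ((n * m1 * (n * m2) : ℕ) : ℝ) := by push_cast; ring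
  rw [hB, e, aux_floor]
  push_cast
  rfl
end

section
/- Let m_1, m_2 be integers with m_1 ≥ 4 and m_2 ≥ 3. Then D_±(C_{m_1} ⊕ C_{m_2}) ≥ ⌊log₂(m_1/3)⌋ + ⌊log₂(m_2/3)⌋ + 4. -/
open Finset

/-- Integer vectors whose nontrivial signed sums are small and nonzero in some coordinate. -/
def GoodSeq (n : ℕ) (P Q : ℤ) : Prop :=
  ∃ x y : Fin n → ℤ, ∀ c : Fin n → ℤ, (∀ i, c i = 0 ∨ c i = 1 ∨ c i = -1) → c ≠ 0 →
    (0 < |∑ i, c i * x i| ∧ |∑ i, c i * x i| < P) ∨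
    (0 < |∑ i, c i * y i| ∧ |∑ i, c i * y i| < Q)

lemma GoodSeq.swap {n : ℕ} {P Q : ℤ} (h : GoodSeq n P Q) : GoodSeq n Q P := by
  obtain ⟨x, y, h⟩ := h
  exact ⟨y, x, fun c hc h0 => (h c hc h0).symm⟩

lemma GoodSeq.double {n : ℕ} {P Q : ℤ} (hP : 1 ≤ P) (h : GoodSeq n P Q) :
    GoodSeq (n + 1) (2 * P) Q := by
  obtain ⟨x, y, h⟩ := h
  refine ⟨Fin.cons 1 (fun i => 2 * x i), Fin.cons 0 y, fun c hc h0 => ?_⟩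
  simp only [Fin.sum_univ_succ, Fin.cons_zero, Fin.cons_succ, mul_one, mul_zero, zero_add]
  have e : ∑ i : Fin n, c i.succ * (2 * x i) = 2 * ∑ i : Fin n, c i.succ * x i := by
    rw [Finset.mul_sum]; exact Finset.sum_congr rfl fun i _ => by ring
  rw [e]
  have h1 := hc 0
  by_cases ht : (fun i : Fin n => c i.succ) = 0
  · have hz : ∀ i : Fin n, c i.succ = 0 := fun i => congrFun ht i
    have hc0 : c 0 ≠ 0 := by
      intro h'
      apply h0
      funext i
      exact Fin.cases h' hz i
    left
    simp only [hz, zero_mul, Finset.sum_const_zero, mul_zero, add_zero]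
    rcases h1 with h1 | h1 | h1
    · exact absurd h1 hc0
    · rw [h1]; norm_num; omega
    · rw [h1]; norm_num; omega
  · rcases h _ (fun i => hc i.succ) ht with h2 | h2
    · left
      generalize (∑ i : Fin n, c i.succ * x i) = X at *
      have := h2.2
      have := abs_pos.1 h2.1
      rw [abs_lt] at *
      rw [abs_pos]
      omega
    · exact Or.inr h2

lemma GoodSeq.iter {n : ℕ} {P Q : ℤ} (hP : 1 ≤ P) (h : GoodSeq n P Q) (a : ℕ) :
    GoodSeq (n + a) (P * 2 ^ a) Q := by
  induction a with
  | zero => simpa using h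
  | succ a ih =>
    have := GoodSeq.double (by have : (0:ℤ) < 2 ^ a := by positivity
                               nlinarith) ih
    rw [show P * 2 ^ (a + 1) = 2 * (P * 2 ^ a) by ring]
    exact this

lemma GoodSeq.iter2 {n : ℕ} {P Q : ℤ} (hP : 1 ≤ P) (hQ : 1 ≤ Q) (h : GoodSeq n P Q) (a b : ℕ) :
    GoodSeq (n + a + b) (P * 2 ^ a) (Q * 2 ^ b) :=
  ((h.iter hP a).swap.iter hQ b).swap

lemma goodSeq_three : GoodSeq 3 4 3 := by
  refine ⟨![1, 0, 2], ![0, 1, 1], fun c hc h0 => ?_⟩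
  have h0' : ¬ (c 0 = 0 ∧ c 1 = 0 ∧ c 2 = 0) := by
    rintro ⟨h1, h2, h3⟩
    apply h0
    funext i
    fin_cases i <;> assumption
  have a0 := hc 0
  have a1 := hc 1
  have a2 := hc 2
  simp only [Fin.sum_univ_succ, Fin.sum_univ_zero, Matrix.cons_val_zero, Matrix.cons_val_succ,
    Fin.succ_zero_eq_one, Fin.succ_one_eq_two]
  simp only [abs_pos, abs_lt]
  generalize c 0 = p at *
  generalize c 1 = q at *
  generalize c 2 = r at *
  omega

lemma goodSeq_four : GoodSeq 4 6 3 := by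
  refine ⟨![1, 1, 1, 3], ![-1, 0, 1, 1], fun c hc h0 => ?_⟩
  have h0' : ¬ (c 0 = 0 ∧ c 1 = 0 ∧ c 2 = 0 ∧ c 3 = 0) := by
    rintro ⟨h1, h2, h3, h4⟩
    apply h0
    funext i
    fin_cases i <;> assumption
  have a0 := hc 0
  have a1 := hc 1
  have a2 := hc 2
  have a3 := hc 3
  rw [Fin.sum_univ_four, Fin.sum_univ_four]
  simp only [abs_pos, abs_lt, Matrix.cons_val]
  generalize c 0 = p at *
  generalize c 1 = q at *
  generalize c 2 = r at *
  generalize c 3 = t at *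
  omega

lemma not_dvd_of_small {X m : ℤ} (h : 0 < |X| ∧ |X| < m) : ¬ m ∣ X := fun hd => by
  have := Int.le_of_dvd h.1 ((dvd_abs _ _).2 hd)
  omega

lemma GoodSeq.exists_free {n : ℕ} {P Q : ℤ} (h : GoodSeq n P Q) {m1 m2 : ℕ}
    (h1 : P ≤ m1) (h2 : Q ≤ m2) :
    ∃ g : Fin n → ZMod m1 × ZMod m2, ¬ HasWZS ({1, -1} : Set ℤ) g := by
  obtain ⟨x, y, h⟩ := h
  refine ⟨fun i => ((x i : ZMod m1), (y i : ZMod m2)), ?_⟩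
  rintro ⟨I, a, ⟨j, hj⟩, ha, hs⟩
  have key := h (fun i => if i ∈ I then a i else 0) (fun i => by
    by_cases hi : i ∈ I
    · have := ha i hi
      simp only [Set.mem_insert_iff, Set.mem_singleton_iff] at this
      simp only [hi, if_true]
      exact Or.inr this
    · simp [hi]) (fun h' => by
    have := congrFun h' j
    have := ha j hj
    simp_all)
  simp only [ite_mul, zero_mul, Finset.sum_ite_mem, Finset.univ_inter] at key
  have hx := congrArg Prod.fst hs
  have hy := congrArg Prod.snd hs
  simp only [Prod.fst_sum, Prod.snd_sum, Prod.smul_fst, Prod.smul_snd, Prod.fst_zero,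
    Prod.snd_zero, zsmul_eq_mul] at hx hy
  rcases key with k | k
  · refine not_dvd_of_small ⟨k.1, k.2.trans_le h1⟩ ((ZMod.intCast_zmod_eq_zero_iff_dvd _ _).1 ?_)
    push_cast
    exact hx
  · refine not_dvd_of_small ⟨k.1, k.2.trans_le h2⟩ ((ZMod.intCast_zmod_eq_zero_iff_dvd _ _).1 ?_)
    push_cast
    exact hy

lemma lt_davpm {G : Type*} [AddCommGroup G] [Finite G] {n : ℕ} (g : Fin n → G)
    (hg : ¬ HasWZS ({1, -1} : Set ℤ) g) : n < Davpm G := by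
  classical
  have := Fintype.ofFinite G
  have hne : {ℓ : ℕ | ∀ g : Fin ℓ → G, HasWZS ({1, -1} : Set ℤ) g}.Nonempty := by
    refine ⟨Fintype.card G + 1, fun f => ?_⟩
    obtain ⟨i, j, hij, hf⟩ := Fintype.exists_ne_map_eq_of_card_lt f (by simp)
    refine ⟨{i, j}, fun k => if k = i then 1 else -1, ⟨i, by simp⟩, fun k _ => ?_, ?_⟩
    · by_cases h : k = i <;> simp [h]
    · rw [Finset.sum_pair hij]
      simp [hij.symm, hf]
  have hmem := Nat.sInf_mem hne
  by_contra hlt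
  have hle : sInf {ℓ : ℕ | ∀ g : Fin ℓ → G, HasWZS ({1, -1} : Set ℤ) g} ≤ n := not_lt.1 hlt
  generalize sInf {ℓ : ℕ | ∀ g : Fin ℓ → G, HasWZS ({1, -1} : Set ℤ) g} = ℓ at hmem hle
  obtain ⟨I, a, hI, ha, hs⟩ := hmem (fun i => g (Fin.castLE hle i))
  apply hg
  refine ⟨I.map (Fin.castLEEmb hle), fun k => if h : k.val < ℓ then a ⟨k.val, h⟩ else 1,
    by simpa using hI, ?_, ?_⟩
  · intro k hk
    obtain ⟨i, hi, rfl⟩ := Finset.mem_map.1 hk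
    simpa using ha i hi
  · rw [Finset.sum_map]
    simpa using hs

lemma floor_spec (m : ℕ) (hm : 3 ≤ m) :
    ∃ r : ℕ, ⌊Real.logb 2 ((m : ℝ) / 3)⌋ = (r : ℤ) ∧ 3 * 2 ^ r ≤ m := by
  have hm' : (3 : ℝ) ≤ m := by exact_mod_cast hm
  have h0 : 0 ≤ ⌊Real.logb 2 ((m : ℝ) / 3)⌋ :=
    Int.floor_nonneg.2 (Real.logb_nonneg (by norm_num) (by linarith))
  obtain ⟨r, hr⟩ := Int.eq_ofNat_of_zero_le h0
  refine ⟨r, hr, ?_⟩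
  have h1 := Int.floor_le (Real.logb 2 ((m : ℝ) / 3))
  rw [hr, Real.le_logb_iff_rpow_le (by norm_num) (by linarith)] at h1
  have h2 : (2 : ℝ) ^ r ≤ m / 3 := by simpa using h1
  have h3 : (3 : ℝ) * 2 ^ r ≤ m := by linarith
  exact_mod_cast h3

theorem stmt8 (m1 m2 : ℕ) (hm1 : 4 ≤ m1) (hm2 : 3 ≤ m2) :
    ⌊Real.logb 2 ((m1 : ℝ) / 3)⌋ + ⌊Real.logb 2 ((m2 : ℝ) / 3)⌋ + 4
      ≤ (Davpm (ZMod m1 × ZMod m2) : ℤ) := by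
  obtain ⟨r, hr, hr'⟩ := floor_spec m1 (by omega)
  obtain ⟨s, hs, hs'⟩ := floor_spec m2 hm2
  rw [hr, hs]
  have : NeZero m1 := ⟨by omega⟩
  have : NeZero m2 := ⟨by omega⟩
  have hs2 : (3 : ℤ) * 2 ^ s ≤ m2 := by exact_mod_cast hs'
  cases r with
  | zero =>
    obtain ⟨g, hg⟩ := (goodSeq_three.iter2 (by norm_num) (by norm_num) 0 s).exists_free
      (m1 := m1) (m2 := m2) (by simpa using hm1) hs2
    have := lt_davpm g hg
    push_cast
    omega
  | succ r =>
    have hr2 : (6 : ℤ) * 2 ^ r ≤ m1 := by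
      have : (3 : ℤ) * 2 ^ (r + 1) ≤ m1 := by exact_mod_cast hr'
      rw [pow_succ] at this
      linarith
    obtain ⟨g, hg⟩ := (goodSeq_four.iter2 (by norm_num) (by norm_num) r s).exists_free
      (m1 := m1) (m2 := m2) hr2 hs2
    have := lt_davpm g hg
    push_cast
    omega
end

section
/- Let m_1, …, m_r be positive integers such that at least ⌊r/2⌋ of them satisfy both {log₂ m_i} ≥ {log₂ 3} and m_i ≥ 4, and suppose every m_i satisfies {log₂ m_i} ≥ {log₂ 3}. If ∑_{i=1}^r {log₂ m_i} < ⌊r/2⌋ + 1, then D_±(C_{m_1} ⊕ ⋯ ⊕ C_{m_r}) = ⌊∑_{i=1}^r log₂ m_i⌋ + 1. -/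
open Finset

/-- Signed binary sums are bounded by `2 ^ n - 1`. -/
lemma signed_bound (n : ℕ) (e : Fin n → ℤ) (he : ∀ k, |e k| ≤ 1) :
    |∑ k, e k * 2 ^ (k : ℕ)| < 2 ^ n := by
  induction n with
  | zero => simp
  | succ n ih =>
    rw [Fin.sum_univ_castSucc]
    have h1 := ih (fun k => e k.castSucc) (fun k => he _)
    have h2 : |e (Fin.last n) * 2 ^ n| ≤ 2 ^ n := by
      rw [abs_mul, abs_of_pos (by positivity : (0 : ℤ) < 2 ^ n)]
      have : (0 : ℤ) < 2 ^ n := by positivity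
      nlinarith [he (Fin.last n)]
    simp only [Fin.val_castSucc, Fin.val_last]
    refine lt_of_le_of_lt (abs_add_le _ _) ?_
    rw [pow_succ]; linarith

/-- Signed binary representations of zero are trivial. -/
lemma signed_zero (n : ℕ) (e : Fin n → ℤ) (he : ∀ k, |e k| ≤ 1)
    (h : ∑ k, e k * 2 ^ (k : ℕ) = 0) : e = 0 := by
  induction n with
  | zero => exact Subsingleton.elim _ _
  | succ n ih =>
    rw [Fin.sum_univ_succ] at h
    have h3 : ∑ k : Fin n, e k.succ * 2 ^ ((k.succ : Fin (n + 1)) : ℕ)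
        = 2 * ∑ k : Fin n, e k.succ * 2 ^ (k : ℕ) := by
      rw [Finset.mul_sum]
      refine Finset.sum_congr rfl fun k _ => ?_
      rw [Fin.val_succ, pow_succ]; ring
    rw [h3] at h
    have h0 := abs_le.1 (he 0)
    simp only [Fin.val_zero, pow_zero, mul_one] at h
    have e0 : e 0 = 0 := by omega
    have h4 := ih (fun k => e k.succ) (fun k => he _) (by omega)
    funext k
    refine Fin.cases e0 (fun k => ?_) k
    exact congrFun h4 k

/-- There is a sequence of length `n` in `∏ i ∈ s, ZMod (m i)` without signed zero subsum. -/
def FreeOn {r : ℕ} (m : Fin r → ℕ) (s : Finset (Fin r)) (n : ℕ) : Prop :=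
  ∃ (ι : Type) (_ : Fintype ι) (g : ι → Fin r → ℤ), Fintype.card ι = n ∧
    ∀ e : ι → ℤ, (∀ k, |e k| ≤ 1) → (∀ i ∈ s, (m i : ℤ) ∣ ∑ k, e k * g k i) → e = 0

lemma FreeOn.empty {r : ℕ} (m : Fin r → ℕ) : FreeOn m ∅ 0 :=
  ⟨Fin 0, inferInstance, fun _ _ => 0, by simp, fun _ _ _ => Subsingleton.elim _ _⟩

lemma FreeOn.union {r : ℕ} {m : Fin r → ℕ} {s t : Finset (Fin r)} {n k : ℕ}
    (hst : Disjoint s t) (hs : FreeOn m s n) (ht : FreeOn m t k) :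
    FreeOn m (s ∪ t) (n + k) := by
  classical
  obtain ⟨ι, _, g, hc, hg⟩ := hs
  obtain ⟨κ, _, g', hc', hg'⟩ := ht
  refine ⟨ι ⊕ κ, inferInstance,
    Sum.elim (fun k i => if i ∈ s then g k i else 0) (fun k i => if i ∈ t then g' k i else 0),
    by simp [hc, hc'], fun e he h => ?_⟩
  have h1 := hg (fun k => e (Sum.inl k)) (fun k => he _) (fun i hi => by
    have := h i (by simp [hi])
    have hit : i ∉ t := Finset.disjoint_left.1 hst hi
    simpa [hi, hit] using this)
  have h2 := hg' (fun k => e (Sum.inr k)) (fun k => he _) (fun i hi => by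
    have := h i (by simp [hi])
    have hit : i ∉ s := Finset.disjoint_right.1 hst hi
    simpa [hi, hit] using this)
  funext x
  rcases x with x | x
  · exact congrFun h1 x
  · exact congrFun h2 x

lemma FreeOn.single {r : ℕ} {m : Fin r → ℕ} (i : Fin r) {a : ℕ} (h : 2 ^ a ≤ m i) :
    FreeOn m {i} a := by
  refine ⟨Fin a, inferInstance, fun k _ => 2 ^ (k : ℕ), by simp, fun e he hd => ?_⟩
  refine signed_zero a e he (Int.eq_zero_of_abs_lt_dvd (hd i (by simp)) ?_)
  have := signed_bound a e he
  have h' : (2 : ℤ) ^ a ≤ m i := by exact_mod_cast h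
  linarith

lemma FreeOn.pair {r : ℕ} {m : Fin r → ℕ} {i j : Fin r} (hij : i ≠ j) {p q : ℕ}
    (hi : 6 * 2 ^ p ≤ m i) (hj : 3 * 2 ^ q ≤ m j) :
    FreeOn m {i, j} (p + 1 + q + 3) := by
  refine ⟨(Fin (p + 1) ⊕ Fin q) ⊕ Fin 3, inferInstance,
    Sum.elim (Sum.elim (fun k x => if x = i then 2 ^ (k : ℕ) else 0)
      (fun k x => if x = j then 2 ^ (k : ℕ) else 0))
      (fun k x => if x = i then ![-1, 1, 3] k * 2 ^ p else 2 ^ q), by simp, fun e he hd => ?_⟩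
  have d1 := hd i (by simp)
  have d2 := hd j (by simp)
  simp only [Fintype.sum_sum_type, Sum.elim_inl, Sum.elim_inr, if_true, if_neg hij,
    if_neg hij.symm, Fin.sum_univ_three, mul_zero, Finset.sum_const_zero, add_zero, zero_add,
    Matrix.cons_val_zero, Matrix.cons_val_one, Matrix.cons_val] at d1 d2
  have b1 := abs_lt.1 (signed_bound (p + 1) (fun k => e (Sum.inl (Sum.inl k))) (fun k => he _))
  have b2 := abs_lt.1 (signed_bound q (fun k => e (Sum.inl (Sum.inr k))) (fun k => he _))
  have z1 := signed_zero (p + 1) (fun k => e (Sum.inl (Sum.inl k))) (fun k => he _)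
  have z2 := signed_zero q (fun k => e (Sum.inl (Sum.inr k))) (fun k => he _)
  have hi' : 6 * (2 : ℤ) ^ p ≤ m i := by exact_mod_cast hi
  have hj' : 3 * (2 : ℤ) ^ q ≤ m j := by exact_mod_cast hj
  have f0 := abs_le.1 (he (Sum.inr 0))
  have f1 := abs_le.1 (he (Sum.inr 1))
  have f2 := abs_le.1 (he (Sum.inr 2))
  rw [pow_succ] at b1
  have hA : (0 : ℤ) < 2 ^ p := by positivity
  have hB : (0 : ℤ) < 2 ^ q := by positivity
  generalize (2 : ℤ) ^ p = A at *
  generalize (2 : ℤ) ^ q = B at *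
  generalize hS : ∑ k : Fin (p + 1), e (Sum.inl (Sum.inl k)) * 2 ^ (k : ℕ) = S at *
  generalize hT : ∑ k : Fin q, e (Sum.inl (Sum.inr k)) * 2 ^ (k : ℕ) = T at *
  have key : e (Sum.inr 0) = 0 ∧ e (Sum.inr 1) = 0 ∧ e (Sum.inr 2) = 0 := by
    generalize e (Sum.inr 0) = x at *
    generalize e (Sum.inr 1) = y at *
    generalize e (Sum.inr 2) = z at *
    have k1 : |S + (x * (-1 * A) + y * (1 * A) + z * (3 * A))| < m i →
        S + (x * (-1 * A) + y * (1 * A) + z * (3 * A)) = 0 :=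
      fun h => Int.eq_zero_of_abs_lt_dvd d1 h
    have k2 : |T + (x * B + y * B + z * B)| < m j → T + (x * B + y * B + z * B) = 0 :=
      fun h => Int.eq_zero_of_abs_lt_dvd d2 h
    clear d1 d2
    simp only [abs_lt] at k1 k2
    obtain ⟨x1, x2⟩ := f0
    obtain ⟨y1, y2⟩ := f1
    obtain ⟨w1, w2⟩ := f2
    interval_cases x <;> interval_cases y <;> interval_cases z <;> omega
  obtain ⟨e0, e1, e2⟩ := key
  simp only [e0, e1, e2, zero_mul, add_zero] at d1 d2
  have y1 := z1 (Int.eq_zero_of_abs_lt_dvd d1 (abs_lt.2 ⟨by omega, by omega⟩))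
  have y2 := z2 (Int.eq_zero_of_abs_lt_dvd d2 (abs_lt.2 ⟨by omega, by omega⟩))
  funext x
  rcases x with (x | x) | x
  · exact congrFun y1 x
  · exact congrFun y2 x
  · fin_cases x
    · exact e0
    · exact e1
    · exact e2

lemma FreeOn.main {r : ℕ} {m : Fin r → ℕ} {a : Fin r → ℕ}
    (h1 : ∀ i, 3 * 2 ^ (a i) ≤ 2 * m i) (ha : ∀ i, 1 ≤ a i) (h4 : ∀ i, 4 ≤ m i → 2 ≤ a i)
    (n : ℕ) : ∀ s : Finset (Fin r), s.card = n → s.card / 2 ≤ (s.filter fun i => 4 ≤ m i).card →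
      FreeOn m s (∑ i ∈ s, a i + s.card / 2) := by
  classical
  induction n using Nat.strong_induction_on with
  | _ n ih =>
  intro s hs hc
  rcases Nat.lt_or_ge s.card 2 with h2 | h2
  · have : s.card = 0 ∨ s.card = 1 := by omega
    rcases this with h | h
    · rw [Finset.card_eq_zero] at h
      subst h
      simpa using FreeOn.empty m
    · obtain ⟨i, rfl⟩ := Finset.card_eq_one.1 h
      have := h1 i
      simpa using FreeOn.single (m := m) i (a := a i) (by omega)
  · have : (s.filter fun i => 4 ≤ m i).Nonempty := by
      rw [← Finset.card_pos]; omega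
    obtain ⟨i, hi⟩ := this
    rw [Finset.mem_filter] at hi
    have : ∃ j ∈ s, j ≠ i ∧ ((s.erase i).erase j).card / 2 ≤
        (((s.erase i).erase j).filter fun i => 4 ≤ m i).card := by
      by_cases hall : ∀ j ∈ s, 4 ≤ m j
      · have : (s.erase i).Nonempty := by
          rw [← Finset.card_pos, Finset.card_erase_of_mem hi.1]; omega
        obtain ⟨j, hj⟩ := this
        have hj' := Finset.mem_erase.1 hj
        refine ⟨j, hj'.2, hj'.1, ?_⟩
        rw [Finset.filter_true_of_mem]
        · omega
        · intro x hx
          exact hall x (Finset.mem_of_mem_erase (Finset.mem_of_mem_erase hx))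
      · push Not at hall
        obtain ⟨j, hj, hj4⟩ := hall
        have hji : j ≠ i := by rintro rfl; omega
        refine ⟨j, hj, hji, ?_⟩
        rw [Finset.filter_erase, Finset.filter_erase, Finset.erase_eq_of_notMem (a := j)
          (s := (Finset.filter _ _).erase i)]
        · rw [Finset.card_erase_of_mem (Finset.mem_filter.2 hi),
            Finset.card_erase_of_mem (Finset.mem_erase.2 ⟨hji, hj⟩),
            Finset.card_erase_of_mem hi.1]
          omega
        · simp; omega
    obtain ⟨j, hj, hji, hcard⟩ := this
    have hjm : j ∈ s.erase i := Finset.mem_erase.2 ⟨hji, hj⟩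
    have c1 := Finset.card_erase_of_mem hjm
    have c2 := Finset.card_erase_of_mem hi.1
    have s1 := Finset.add_sum_erase s a hi.1
    have s2 := Finset.add_sum_erase _ a hjm
    have IH := ih _ (by omega) ((s.erase i).erase j) rfl hcard
    obtain ⟨p, hp⟩ := Nat.exists_eq_add_of_le (h4 i hi.2)
    obtain ⟨q, hq⟩ := Nat.exists_eq_add_of_le (ha j)
    have hi1 := h1 i
    have hj1 := h1 j
    rw [hp, pow_add] at hi1
    rw [hq, pow_add] at hj1
    have P := FreeOn.pair (m := m) hji.symm (p := p) (q := q) (by omega) (by omega)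
    have U := P.union (by simp) IH
    have es : ({i, j} : Finset (Fin r)) ∪ (s.erase i).erase j = s := by
      ext x
      simp only [Finset.mem_union, Finset.mem_insert, Finset.mem_singleton, Finset.mem_erase]
      constructor
      · rintro ((rfl | rfl) | h)
        · exact hi.1
        · exact hj
        · exact h.2.2
      · intro h; tauto
    rw [es] at U
    convert U using 1
    omega

/-- Pigeonhole upper bound. -/
lemma hasWZS_of_card {G : Type*} [AddCommGroup G] [Fintype G] {ℓ : ℕ}
    (h : Fintype.card G < 2 ^ ℓ) (g : Fin ℓ → G) : HasWZS ({1, -1} : Set ℤ) g := by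
  classical
  obtain ⟨s, t, hst, heq⟩ := Fintype.exists_ne_map_eq_of_card_lt
    (fun s : Finset (Fin ℓ) => ∑ i ∈ s, g i) (by simpa using h)
  refine ⟨symmDiff s t, fun i => if i ∈ s then 1 else -1, ?_, ?_, ?_⟩
  · rw [Finset.nonempty_iff_ne_empty]
    intro h0
    exact hst (symmDiff_eq_bot.1 h0)
  · intro i _
    by_cases hi : i ∈ s <;> simp [hi]
  · have hd : Disjoint (s \ t) (t \ s) := disjoint_sdiff_sdiff
    have : symmDiff s t = (s \ t) ∪ (t \ s) := rfl
    rw [this, Finset.sum_union hd]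
    have e1 : ∑ i ∈ s \ t, (if i ∈ s then (1 : ℤ) else -1) • g i = ∑ i ∈ s \ t, g i :=
      Finset.sum_congr rfl fun i hi => by simp [(Finset.mem_sdiff.1 hi).1]
    have e2 : ∑ i ∈ t \ s, (if i ∈ s then (1 : ℤ) else -1) • g i = -∑ i ∈ t \ s, g i := by
      rw [← Finset.sum_neg_distrib]
      exact Finset.sum_congr rfl fun i hi => by simp [(Finset.mem_sdiff.1 hi).2]
    rw [e1, e2]
    have a1 := Finset.sum_inter_add_sum_sdiff s t g
    have a2 := Finset.sum_inter_add_sum_sdiff t s g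
    rw [Finset.inter_comm] at a2
    rw [← a1, ← a2] at heq
    rw [add_left_cancel heq, add_neg_cancel]

/-- Lower bound from a free sequence. -/
lemma lt_of_free {r : ℕ} {m : Fin r → ℕ} {N ℓ : ℕ} (hF : FreeOn m Finset.univ N)
    (h : ∀ g : Fin ℓ → (∀ i, ZMod (m i)), HasWZS ({1, -1} : Set ℤ) g) : N < ℓ := by
  classical
  by_contra hlt
  push Not at hlt
  obtain ⟨ι, _, g, hc, hg⟩ := hF
  let f : Fin ℓ ↪ ι := (Fin.castLEEmb hlt).trans
    (Fintype.equivFinOfCardEq hc).symm.toEmbedding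
  obtain ⟨I, a, ⟨k0, hk0⟩, ha, hs⟩ := h (fun k i => (g (f k) i : ZMod (m i)))
  have H := hg (fun x => ∑ k ∈ I, if f k = x then a k else 0) ?_ ?_
  · have := congrFun H (f k0)
    simp only [f.injective.eq_iff, Finset.sum_ite_eq', hk0, if_true, Pi.zero_apply] at this
    have h1 := ha k0 hk0
    rw [this] at h1
    simp at h1
  · intro x
    by_cases hx : ∃ k, f k = x
    · obtain ⟨k, rfl⟩ := hx
      simp only [f.injective.eq_iff, Finset.sum_ite_eq']
      split_ifs with hk
      · rcases ha k hk with h | h <;> simp_all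
      · simp
    · push Not at hx
      simp [hx]
  · intro i _
    rw [← ZMod.intCast_zmod_eq_zero_iff_dvd]
    have h1 := congrFun hs i
    rw [Finset.sum_apply] at h1
    rw [← Pi.zero_apply (M := fun i => ZMod (m i)) i, ← h1]
    simp_rw [Finset.sum_mul]
    rw [Finset.sum_comm]
    push_cast
    refine Finset.sum_congr rfl fun k _ => ?_
    simp

theorem stmt9 (r : ℕ) (m : Fin r → ℕ) (hm : ∀ i, 0 < m i)
    (hfr : ∀ i, Int.fract (Real.logb 2 3) ≤ Int.fract (Real.logb 2 (m i)))
    (hmany : r / 2 ≤ (Finset.univ.filter fun i =>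
        Int.fract (Real.logb 2 3) ≤ Int.fract (Real.logb 2 (m i)) ∧ 4 ≤ m i).card)
    (hsum : ∑ i, Int.fract (Real.logb 2 (m i)) < (r / 2 : ℕ) + 1) :
    (Davpm (∀ i, ZMod (m i)) : ℤ) = ⌊∑ i, Real.logb 2 (m i)⌋ + 1 := by
  classical
  have hne : ∀ i, NeZero (m i) := fun i => ⟨(hm i).ne'⟩
  have hfl : ∀ n : ℕ, 0 < n → ⌊Real.logb 2 (n : ℝ)⌋ = (Nat.log 2 n : ℤ) := fun n hn => by
    have := Real.floor_logb_natCast (b := 2) (r := (n : ℝ)) (by positivity)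
    rw [Nat.cast_ofNat] at this
    rw [this, Int.log_natCast]
  have hl3 : Int.fract (Real.logb 2 3) = Real.logb 2 3 - 1 := by
    have := hfl 3 (by norm_num)
    have h3 : Nat.log 2 3 = 1 := by decide
    rw [Int.fract]
    rw [h3] at this
    push_cast at this
    rw [this]; simp
  have hl : ∀ i, Int.fract (Real.logb 2 (m i)) = Real.logb 2 (m i) - Nat.log 2 (m i) := fun i => by
    rw [Int.fract, hfl _ (hm i)]; simp
  have h1 : ∀ i, 3 * 2 ^ (Nat.log 2 (m i)) ≤ 2 * m i := fun i => by
    have := hfr i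
    rw [hl3, hl] at this
    have hmi : (0 : ℝ) < m i := by exact_mod_cast hm i
    have h' : Real.logb 2 (3 * 2 ^ (Nat.log 2 (m i))) ≤ Real.logb 2 (2 * m i) := by
      rw [Real.logb_mul (by norm_num) (by positivity), Real.logb_mul (by norm_num) hmi.ne',
        Real.logb_pow, Real.logb_self_eq_one (by norm_num)]
      linarith
    rw [Real.logb_le_logb (by norm_num) (by positivity) (by positivity)] at h'
    exact_mod_cast h'
  have ha : ∀ i, 1 ≤ Nat.log 2 (m i) := fun i => by
    by_contra h0
    have h00 : Nat.log 2 (m i) = 0 := by omega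
    have := h1 i
    rw [h00] at this
    have h2 := Nat.log_eq_zero_iff.1 h00
    omega
  have h4 : ∀ i, 4 ≤ m i → 2 ≤ Nat.log 2 (m i) := fun i h =>
    Nat.le_log_of_pow_le (by norm_num) (by omega)
  have hF := FreeOn.main h1 ha h4 _ Finset.univ rfl (by
    simp only [Finset.card_univ, Fintype.card_fin]
    refine hmany.trans (Finset.card_le_card ?_)
    intro i; simp)
  simp only [Finset.card_univ, Fintype.card_fin] at hF
  set N := ∑ i, Nat.log 2 (m i) + r / 2 with hN
  have hS : ∑ i, Real.logb 2 (m i) < N + 1 := by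
    simp_rw [hl, Finset.sum_sub_distrib] at hsum
    rw [hN]
    push_cast at hsum ⊢
    linarith
  have hcard : Fintype.card (∀ i, ZMod (m i)) < 2 ^ (N + 1) := by
    rw [Fintype.card_pi]
    simp_rw [ZMod.card]
    have hp : (0 : ℝ) < ∏ i, (m i : ℝ) := Finset.prod_pos fun i _ => by exact_mod_cast hm i
    have : ∏ i, (m i : ℝ) < 2 ^ (N + 1) := by
      rw [← Real.logb_lt_logb_iff (b := 2) (by norm_num) hp (by positivity),
        Real.logb_prod _ _ (fun i _ => by exact_mod_cast (hm i).ne'), Real.logb_pow,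
        Real.logb_self_eq_one (by norm_num)]
      push_cast
      linarith
    exact_mod_cast this
  have hmem : N + 1 ∈ {ℓ : ℕ | ∀ g : Fin ℓ → (∀ i, ZMod (m i)), HasWZS ({1, -1} : Set ℤ) g} :=
    fun g => hasWZS_of_card hcard g
  have hD : Davpm (∀ i, ZMod (m i)) = N + 1 := by
    refine le_antisymm (Nat.sInf_le hmem) ?_
    exact lt_of_free hF (Nat.sInf_mem ⟨_, hmem⟩)
  have hSl : (N : ℝ) ≤ ∑ i, Real.logb 2 (m i) := by
    have hhalf : (1 : ℝ) / 2 ≤ Real.logb 2 3 - 1 := by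
      have : (3 / 2 : ℝ) ≤ Real.logb 2 3 := by
        have h8 : Real.logb 2 (2 ^ 3) ≤ Real.logb 2 (3 ^ 2) := by
          rw [Real.logb_le_logb (by norm_num) (by positivity) (by positivity)]
          norm_num
        rw [Real.logb_pow, Real.logb_pow, Real.logb_self_eq_one (by norm_num)] at h8
        push_cast at h8
        linarith
      linarith
    have h5 : ∑ i : Fin r, ((1 : ℝ) / 2 + Nat.log 2 (m i)) ≤ ∑ i, Real.logb 2 (m i) := by
      refine Finset.sum_le_sum fun i _ => ?_
      have := hfr i
      rw [hl3, hl] at this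
      linarith
    rw [Finset.sum_add_distrib] at h5
    simp only [Finset.sum_const, Finset.card_univ, Fintype.card_fin, nsmul_eq_mul] at h5
    have h6 : ((r / 2 : ℕ) : ℝ) ≤ r / 2 := Nat.cast_div_le
    rw [hN]
    push_cast at h5 ⊢
    linarith
  have hfloor : ⌊∑ i, Real.logb 2 (m i)⌋ = (N : ℤ) := by
    rw [Int.floor_eq_iff]
    exact ⟨by exact_mod_cast hSl, by exact_mod_cast hS⟩
  rw [hD, hfloor]
  push_cast
  rfl
end

section
/- Let n ≥ 4 be an integer with {log₂ n} ≥ {log₂ 3}. If r is a positive integer such that {log₂ n} < (⌊r/2⌋ + 1)/r, then D_±(C_n^r) = ⌊r log₂ n⌋ + 1, where C_n^r denotes the direct sum of r copies of the cyclic group C_n. -/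
open Finset

/-- A family with no nontrivial vanishing combination with coefficients in `{-1,0,1}`. -/
def PMFree {ι G : Type*} [Fintype ι] [AddCommGroup G] (g : ι → G) : Prop :=
  ∀ ε : ι → ℤ, (∀ i, |ε i| ≤ 1) → ∑ i, ε i • g i = 0 → ∀ i, ε i = 0

/-- There is a plus-minus free sequence of length `l` in `G`. -/
def HasFree (G : Type*) [AddCommGroup G] (l : ℕ) : Prop :=
  ∃ g : Fin l → G, PMFree g

lemma PMFree.hasFree {ι G : Type*} [Fintype ι] [AddCommGroup G] {g : ι → G} (h : PMFree g)
    {l : ℕ} (hl : Fintype.card ι = l) : HasFree G l := by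
  let e : ι ≃ Fin l := Fintype.equivFinOfCardEq hl
  refine ⟨fun i => g (e.symm i), fun ε hε hs i => ?_⟩
  have := h (fun i => ε (e i)) (fun i => hε _) (by
    rw [← hs, ← e.sum_comp]; simp) (e.symm i)
  simpa using this

lemma HasFree.prod {G H : Type*} [AddCommGroup G] [AddCommGroup H] {a b : ℕ}
    (h1 : HasFree G a) (h2 : HasFree H b) : HasFree (G × H) (a + b) := by
  obtain ⟨g, hg⟩ := h1
  obtain ⟨h, hh⟩ := h2
  have : PMFree (Sum.elim (fun i => (g i, (0 : H))) (fun i => ((0 : G), h i))) := by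
    intro ε hε hs
    have e1 := congrArg Prod.fst hs
    have e2 := congrArg Prod.snd hs
    simp [Fintype.sum_sum_type, Prod.fst_sum, Prod.snd_sum] at e1 e2
    have f1 := hg _ (fun i => hε (Sum.inl i)) e1
    have f2 := hh _ (fun i => hε (Sum.inr i)) e2
    rintro (i | i)
    · exact f1 i
    · exact f2 i
  exact this.hasFree (by simp)

lemma HasFree.map {G H : Type*} [AddCommGroup G] [AddCommGroup H] {a : ℕ}
    (h1 : HasFree G a) (f : G →+ H) (hf : Function.Injective f) : HasFree H a := by
  obtain ⟨g, hg⟩ := h1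
  refine ⟨fun i => f (g i), fun ε hε hs => hg ε hε (hf ?_)⟩
  rw [map_sum, map_zero, ← hs]
  simp

lemma HasFree.not_wzs {G : Type*} [AddCommGroup G] {a l : ℕ} (h1 : HasFree G a) (hl : l ≤ a) :
    ¬ ∀ g : Fin l → G, HasWZS ({1, -1} : Set ℤ) g := by
  intro h
  obtain ⟨g, hg⟩ := h1
  have hg' : PMFree (fun i => g (Fin.castLE hl i)) := by
    intro ε hε hs i
    have hinj : Function.Injective (Fin.castLE hl) := Fin.castLE_injective hl
    have key := hg (Function.extend (Fin.castLE hl) ε 0) (fun j => by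
      by_cases hj : ∃ i, Fin.castLE hl i = j
      · obtain ⟨i, rfl⟩ := hj
        rw [hinj.extend_apply]; exact hε i
      · rw [Function.extend_apply' _ _ _ hj]; simp) (by
      rw [← hs]
      symm
      refine Fintype.sum_of_injective (Fin.castLE hl) hinj _ _ ?_ ?_
      · intro j hj
        rw [Function.extend_apply' _ _ _ (by simpa only [Set.mem_range] using hj)]; simp
      · intro i
        rw [hinj.extend_apply]) (Fin.castLE hl i)
    rwa [hinj.extend_apply] at key
  obtain ⟨I, a, ⟨i0, hi0⟩, ha, hs⟩ := h (fun i => g (Fin.castLE hl i))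
  have := hg' (fun i => if i ∈ I then a i else 0) (fun i => by
    by_cases hi : i ∈ I
    · rcases ha i hi with h | h
      · simp [hi, h]
      · rw [Set.mem_singleton_iff] at h; simp [hi, h]
    · simp [hi]) (by
    rw [← hs]; simp [ite_smul, Finset.sum_ite_mem]) i0
  simp only [hi0, if_true] at this
  rcases ha i0 hi0 with h | h
  · omega
  · rw [Set.mem_singleton_iff] at h; omega

lemma wzs_of_card {G : Type*} [AddCommGroup G] [Fintype G] {l : ℕ}
    (h : Fintype.card G < 2 ^ l) (g : Fin l → G) : HasWZS ({1, -1} : Set ℤ) g := by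
  classical
  obtain ⟨I, J, hne, hIJ⟩ := Fintype.exists_ne_map_eq_of_card_lt
    (fun I : Finset (Fin l) => ∑ i ∈ I, g i) (by simpa using h)
  refine ⟨(I \ J) ∪ (J \ I), fun i => if i ∈ I then 1 else -1, ?_, ?_, ?_⟩
  · rw [Finset.nonempty_iff_ne_empty]
    intro h0
    apply hne
    rw [Finset.union_eq_empty, Finset.sdiff_eq_empty_iff_subset,
      Finset.sdiff_eq_empty_iff_subset] at h0
    exact Finset.Subset.antisymm h0.1 h0.2
  · intro i _
    by_cases hi : i ∈ I <;> simp [hi]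
  · rw [Finset.sum_union (by
      rw [Finset.disjoint_left]; intro i; simp only [Finset.mem_sdiff]; tauto)]
    have e1 : ∑ i ∈ I \ J, (if i ∈ I then (1 : ℤ) else -1) • g i = ∑ i ∈ I \ J, g i :=
      Finset.sum_congr rfl (fun i hi => by simp [(Finset.mem_sdiff.1 hi).1])
    have e2 : ∑ i ∈ J \ I, (if i ∈ I then (1 : ℤ) else -1) • g i = -∑ i ∈ J \ I, g i := by
      rw [← Finset.sum_neg_distrib]
      exact Finset.sum_congr rfl (fun i hi => by simp [(Finset.mem_sdiff.1 hi).2])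
    rw [e1, e2]
    have h1 := Finset.sum_inter_add_sum_sdiff I J g
    have h2 := Finset.sum_inter_add_sum_sdiff J I g
    rw [Finset.inter_comm] at h2
    have h3 : ∑ i ∈ I, g i = ∑ i ∈ J, g i := hIJ
    rw [← h1, ← h2] at h3
    rw [add_left_cancel h3, add_neg_cancel]

lemma pow_sum_le (K : ℕ) (ε : Fin K → ℤ) (hε : ∀ i, |ε i| ≤ 1) :
    |∑ i, ε i * 2 ^ (i : ℕ)| ≤ 2 ^ K - 1 := by
  induction K with
  | zero => simp
  | succ K ih =>
    rw [Fin.sum_univ_castSucc]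
    have h1 := ih (fun i => ε i.castSucc) (fun i => hε _)
    have h2 := hε (Fin.last K)
    simp only [Fin.val_castSucc, Fin.val_last]
    have h3 : |ε (Fin.last K) * 2 ^ K| ≤ 2 ^ K := by
      rw [abs_mul, abs_of_nonneg (by positivity : (0 : ℤ) ≤ 2 ^ K)]
      nlinarith [pow_pos (by norm_num : (0 : ℤ) < 2) K]
    have := abs_add_le (∑ i : Fin K, ε i.castSucc * 2 ^ (i : ℕ)) (ε (Fin.last K) * 2 ^ K)
    rw [pow_succ]
    linarith

lemma pow_sum_succ (K : ℕ) (ε : Fin (K + 1) → ℤ) :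
    ∑ i, ε i * 2 ^ (i : ℕ) = ε 0 + 2 * ∑ i : Fin K, ε i.succ * 2 ^ (i : ℕ) := by
  rw [Fin.sum_univ_succ, Finset.mul_sum]
  simp only [Fin.val_zero, pow_zero, mul_one, Fin.val_succ, pow_succ]
  congr 1
  exact Finset.sum_congr rfl (fun i _ => by ring)

lemma pow_sum_free (K : ℕ) (ε : Fin K → ℤ) (hε : ∀ i, |ε i| ≤ 1)
    (h : ∑ i, ε i * 2 ^ (i : ℕ) = 0) : ∀ i, ε i = 0 := by
  induction K with
  | zero => exact fun i => i.elim0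
  | succ K ih =>
    rw [pow_sum_succ] at h
    have h0 := abs_le.1 (hε 0)
    have h1 : ε 0 = 0 := by omega
    have := ih (fun i => ε i.succ) (fun i => hε _) (by omega)
    intro i
    refine Fin.cases h1 (fun j => this j) i

lemma free_one (n k : ℕ) (h : 2 ^ k ≤ n) : HasFree (ZMod n) k := by
  refine ⟨fun i => ((2 ^ (i : ℕ) : ℤ) : ZMod n), fun ε hε hs => ?_⟩
  have hs' : ((∑ i, ε i * 2 ^ (i : ℕ) : ℤ) : ZMod n) = 0 := by
    rw [← hs]; push_cast; simp
  rw [ZMod.intCast_zmod_eq_zero_iff_dvd] at hs'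
  refine pow_sum_free k ε hε (Int.eq_zero_of_abs_lt_dvd hs' ?_)
  have := pow_sum_le k ε hε
  have h' : (2 : ℤ) ^ k ≤ n := by exact_mod_cast h
  omega

/-- The arithmetic core of the construction in `C_n ⊕ C_n`. -/
lemma core (n m L a b c d T : ℤ) (hm : 1 ≤ m) (hn : 6 * m ≤ n) (hL : |L| ≤ 2 * m - 1)
    (ha : |a| ≤ 1) (hb : |b| ≤ 1) (hc : |c| ≤ 1) (hd : |d| ≤ 1)
    (ht : |d + 2 * T| ≤ 2 * m - 1)
    (hx : n ∣ 3 * (d + 2 * T) + (a + b + c))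
    (hy : n ∣ L + 2 * m * (b - c + d)) :
    L = 0 ∧ a = 0 ∧ b = 0 ∧ c = 0 ∧ d + 2 * T = 0 := by
  rw [abs_le] at hL ha hb hc hd ht
  obtain ⟨q, hq⟩ := hx
  have q1 : q ≤ 1 := by nlinarith
  have q2 : -1 ≤ q := by nlinarith
  have hx' : d + 2 * T = 0 ∧ a + b + c = 0 ∨
      ((a = 1 ∧ b = 1 ∧ c = 1 ∨ a = -1 ∧ b = -1 ∧ c = -1) ∧ (d = 1 ∨ d = -1)) := by
    have : q = -1 ∨ q = 0 ∨ q = 1 := by omega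
    rcases this with rfl | rfl | rfl <;> omega
  rcases hx' with ⟨h1, h2⟩ | ⟨h1, h2⟩
  · have hd0 : d = 0 := by omega
    subst hd0
    have hbc : b - c = -2 ∨ b - c = -1 ∨ b - c = 0 ∨ b - c = 1 ∨ b - c = 2 := by omega
    have hz := Int.eq_zero_of_abs_lt_dvd hy (by
      rw [abs_lt]
      rcases hbc with h | h | h | h | h <;> rw [h] <;> constructor <;> omega)
    rcases hbc with h | h | h | h | h <;> rw [h] at hz <;> omega
  · exfalso
    have hbc : b - c = 0 := by omega
    rw [hbc] at hy
    have hz := Int.eq_zero_of_abs_lt_dvd hy (by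
      rw [abs_lt]
      rcases h2 with h | h <;> rw [h] <;> constructor <;> omega)
    rcases h2 with h | h <;> rw [h] at hz <;> omega

lemma free_two (n K : ℕ) (h : 3 * 2 ^ (K + 1) ≤ n) :
    HasFree (ZMod n × ZMod n) (2 * K + 5) := by
  have hF : PMFree (Sum.elim (fun i : Fin (K + 1) => ((0 : ZMod n), ((2 ^ (i : ℕ) : ℤ) : ZMod n)))
      (Sum.elim (![((1 : ZMod n), (0 : ZMod n)), (1, ((2 ^ (K + 1) : ℤ) : ZMod n)),
          (1, ((-2 ^ (K + 1) : ℤ) : ZMod n))] : Fin 3 → ZMod n × ZMod n)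
        (fun i : Fin (K + 1) => (((3 * 2 ^ (i : ℕ) : ℤ) : ZMod n),
          (((if i = 0 then 2 ^ (K + 1) else 0 : ℤ)) : ZMod n))))) := by
    intro ε hε hs
    set u : Fin (K + 1) → ℤ := fun i => ε (Sum.inl i) with hu
    set v : Fin (K + 1) → ℤ := fun i => ε (Sum.inr (Sum.inr i)) with hv
    set w : Fin 3 → ℤ := fun i => ε (Sum.inr (Sum.inl i)) with hw
    have e1 := congrArg Prod.fst hs
    have e2 := congrArg Prod.snd hs
    simp only [Fintype.sum_sum_type, Sum.elim_inl, Sum.elim_inr, Prod.fst_add, Prod.snd_add,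
      Prod.fst_sum, Prod.snd_sum, Prod.smul_fst, Prod.smul_snd, Prod.fst_zero, Prod.snd_zero,
      Fin.sum_univ_three] at e1 e2
    simp only [Matrix.cons_val, zsmul_eq_mul] at e1 e2
    have hx : ((3 * ∑ i, v i * 2 ^ (i : ℕ) + (w 0 + w 1 + w 2) : ℤ) : ZMod n) = 0 := by
      rw [← e1]
      push_cast
      rw [Finset.mul_sum]
      simp only [mul_zero, Finset.sum_const_zero, zero_add, mul_one]
      rw [add_comm]
      congr 1
      exact Finset.sum_congr rfl (fun i _ => by simp only [hv]; ring)
    have hy : ((∑ i, u i * 2 ^ (i : ℕ) + 2 * 2 ^ K * (w 1 - w 2 + v 0) : ℤ) : ZMod n) = 0 := by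
      rw [← e2]
      have : ∑ i : Fin (K + 1), (ε (Sum.inr (Sum.inr i)) : ZMod n) *
          ((if i = 0 then 2 ^ (K + 1) else 0 : ℤ) : ZMod n) = v 0 * 2 ^ (K + 1) := by
        rw [Finset.sum_eq_single 0]
        · simp [hv]
        · intro b _ hb; simp [hb]
        · simp
      rw [this]
      push_cast
      simp only [hu, hw]
      ring
    rw [ZMod.intCast_zmod_eq_zero_iff_dvd] at hx hy
    have hu1 := pow_sum_le (K + 1) u (fun i => hε _)
    have hv1 := pow_sum_le (K + 1) v (fun i => hε _)
    have h' : (3 : ℤ) * 2 ^ (K + 1) ≤ n := by exact_mod_cast h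
    have hp : (1 : ℤ) ≤ 2 ^ K := one_le_pow₀ (by norm_num)
    rw [pow_succ] at hu1 hv1 h'
    rw [pow_sum_succ K v] at hx hv1
    obtain ⟨h1, h2, h3, h4, h5⟩ := core n (2 ^ K) (∑ i, u i * 2 ^ (i : ℕ)) (w 0) (w 1) (w 2) (v 0)
      (∑ i : Fin K, v i.succ * 2 ^ (i : ℕ)) hp (by linarith) (by linarith) (hε _) (hε _) (hε _)
      (hε _) (by linarith) hx hy
    rw [← pow_sum_succ] at h5
    have k1 := pow_sum_free _ u (fun i => hε _) h1
    have k2 := pow_sum_free _ v (fun i => hε _) h5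
    rintro (i | i | i)
    · exact k1 i
    · fin_cases i
      · exact h2
      · exact h3
      · exact h4
    · exact k2 i
  exact hF.hasFree (by simp; ring)

lemma free_all (n K : ℕ) (h : 3 * 2 ^ (K + 1) ≤ n) (r : ℕ) :
    HasFree (Fin r → ZMod n) (r * (K + 2) + r / 2) := by
  induction r using Nat.twoStepInduction with
  | zero => exact ⟨fun _ => 0, fun ε _ _ i => absurd i.2 (by simp)⟩
  | one =>
    have h1 : HasFree (ZMod n) (1 * (K + 2) + 1 / 2) := by
      simpa using free_one n (K + 2) (le_trans (by rw [pow_succ _ (K + 1)]; omega) h)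
    refine h1.map (AddMonoidHom.mk' (fun x _ => x) (fun _ _ => rfl)) (fun x y hxy => ?_)
    exact congrFun hxy 0
  | more r ih _ =>
    have h1 := (free_two n K h).prod ih
    have e : 2 * K + 5 + (r * (K + 2) + r / 2) = (r + 2) * (K + 2) + (r + 2) / 2 := by
      have : (r + 2) / 2 = r / 2 + 1 := by omega
      rw [this]; ring
    rw [e] at h1
    refine h1.map (AddMonoidHom.mk' (fun p => (Fin.cons p.1.1 (Fin.cons p.1.2 p.2) :
      Fin (r + 2) → ZMod n)) ?_) ?_
    · intro p q
      funext i
      refine Fin.cases ?_ (fun j => ?_) i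
      · simp
      · refine Fin.cases ?_ (fun j => ?_) j <;> simp
    · rintro ⟨⟨a, b⟩, f⟩ ⟨⟨a2, b2⟩, f2⟩ hxy
      simp only [AddMonoidHom.mk'_apply] at hxy
      obtain ⟨h1, h2⟩ := Fin.cons_inj.1 hxy
      obtain ⟨h2, h3⟩ := Fin.cons_inj.1 h2
      subst h1 h2 h3
      rfl

theorem stmt10 (n : ℕ) (hn : 4 ≤ n)
    (hfr : Int.fract (Real.logb 2 3) ≤ Int.fract (Real.logb 2 n))
    (r : ℕ) (hr : 0 < r)
    (hlt : Int.fract (Real.logb 2 n) < ((r / 2 : ℕ) + 1 : ℝ) / r) :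
    (Davpm (Fin r → ZMod n) : ℤ) = ⌊(r : ℝ) * Real.logb 2 n⌋ + 1 := by
  have hlog : 2 ≤ Nat.log 2 n := by
    rw [Nat.le_log_iff_pow_le (by norm_num) (by omega)]; omega
  obtain ⟨K, hK⟩ := Nat.exists_eq_add_of_le' hlog
  have hfl : ⌊Real.logb 2 n⌋ = ((K + 2 : ℕ) : ℤ) := by
    have := Real.floor_logb_natCast (b := 2) (r := (n : ℝ)) (by positivity)
    rw [Int.log_natCast, hK] at this
    exact_mod_cast this
  have hfl3 : ⌊Real.logb 2 3⌋ = 1 := by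
    rw [Int.floor_eq_iff]
    constructor
    · rw [Real.le_logb_iff_rpow_le (by norm_num) (by norm_num)]; norm_num
    · rw [Real.logb_lt_iff_lt_rpow (by norm_num) (by norm_num)]; norm_num
  have h3 : (3 : ℝ) / 2 ≤ Real.logb 2 3 := by
    have : Real.logb 2 (2 ^ 3) ≤ Real.logb 2 (3 ^ 2) :=
      Real.logb_le_logb_of_le (by norm_num) (by norm_num) (by norm_num)
    rw [Real.logb_pow, Real.logb_pow, Real.logb_self_eq_one (by norm_num)] at this
    push_cast at this
    linarith
  have hn0 : (0 : ℝ) < n := by positivity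
  have hr0 : (0 : ℝ) < r := by positivity
  have hfn : Int.fract (Real.logb 2 n) = Real.logb 2 n - (K + 2) := by
    rw [Int.fract, hfl]; push_cast; ring
  have hf3 : Int.fract (Real.logb 2 3) = Real.logb 2 3 - 1 := by
    rw [Int.fract, hfl3]; push_cast; ring
  rw [hfn, lt_div_iff₀ hr0] at hlt
  rw [hfn, hf3] at hfr
  have hbig : 3 * 2 ^ (K + 1) ≤ n := by
    have : Real.logb 2 (3 * 2 ^ (K + 1)) ≤ Real.logb 2 n := by
      rw [Real.logb_mul (by norm_num) (by positivity), Real.logb_pow,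
        Real.logb_self_eq_one (by norm_num)]
      push_cast
      linarith
    rw [Real.logb_le_logb (by norm_num) (by positivity) hn0] at this
    exact_mod_cast this
  have hfloor : ⌊(r : ℝ) * Real.logb 2 n⌋ = ((r * (K + 2) + r / 2 : ℕ) : ℤ) := by
    rw [Int.floor_eq_iff]
    have hh : ((r / 2 : ℕ) : ℝ) ≤ (r : ℝ) / 2 := Nat.cast_div_le
    constructor
    · rw [Int.cast_natCast, Nat.cast_add, Nat.cast_mul, Nat.cast_add, Nat.cast_ofNat]
      nlinarith
    · rw [Int.cast_natCast, Nat.cast_add, Nat.cast_mul, Nat.cast_add, Nat.cast_ofNat]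
      nlinarith
  have hcard : n ^ r < 2 ^ (r * (K + 2) + r / 2 + 1) := by
    have h1 := Int.lt_floor_add_one ((r : ℝ) * Real.logb 2 n)
    rw [hfloor] at h1
    have : Real.logb 2 ((n : ℝ) ^ r) < Real.logb 2 (2 ^ (r * (K + 2) + r / 2 + 1)) := by
      rw [Real.logb_pow, Real.logb_pow, Real.logb_self_eq_one (by norm_num)]
      rw [Int.cast_natCast] at h1
      rw [Nat.cast_add_one, mul_one]
      exact h1
    rw [Real.logb_lt_logb_iff (by norm_num) (by positivity) (by positivity)] at this
    exact_mod_cast this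
  rw [hfloor]
  have hD : Davpm (Fin r → ZMod n) = r * (K + 2) + r / 2 + 1 := by
    have : NeZero n := ⟨by omega⟩
    have hmem : r * (K + 2) + r / 2 + 1 ∈
        {l : ℕ | ∀ g : Fin l → (Fin r → ZMod n), HasWZS ({1, -1} : Set ℤ) g} := by
      intro g
      exact wzs_of_card (by simpa [ZMod.card] using hcard) g
    apply le_antisymm
    · exact Nat.sInf_le hmem
    · refine le_csInf ⟨_, hmem⟩ (fun l hl => ?_)
      by_contra hlt'
      exact (free_all n K hbig r).not_wzs (by omega) hl
  rw [hD]
  push_cast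
  ring
end

section
/- Let n ≥ 2 be an integer such that {log₂(3n)} < 1 − {log₂ 3} or {log₂(3n)} ≥ {log₂ 3}. Then D_±(C_3 ⊕ C_{3n}) = ⌊log₂(9n)⌋ + 1. -/
open Finset

theorem upper_aux {G : Type*} [AddCommGroup G] [Fintype G] {l : ℕ}
    (hl : Fintype.card G < 2 ^ l) (g : Fin l → G) : HasWZS ({1, -1} : Set ℤ) g := by
  classical
  obtain ⟨S, T, hne, hST⟩ := Fintype.exists_ne_map_eq_of_card_lt
    (fun S : Finset (Fin l) => ∑ i ∈ S, g i) (by simpa using hl)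
  refine ⟨(S \ T) ∪ (T \ S), fun i => if i ∈ S then 1 else -1, ?_, ?_, ?_⟩
  · rw [Finset.nonempty_iff_ne_empty]
    intro h0
    apply hne
    ext i
    have := congrArg (fun U => i ∈ U) h0
    simp at this
    tauto
  · intro i _
    by_cases hi : i ∈ S <;> simp [hi]
  · rw [Finset.sum_union (by
      rw [Finset.disjoint_left]; intro i; simp; tauto)]
    have h1 : ∑ i ∈ S \ T, (if i ∈ S then (1 : ℤ) else -1) • g i = ∑ i ∈ S \ T, g i := by
      apply Finset.sum_congr rfl
      intro i hi
      simp at hi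
      simp [hi.1]
    have h2 : ∑ i ∈ T \ S, (if i ∈ S then (1 : ℤ) else -1) • g i = - ∑ i ∈ T \ S, g i := by
      rw [← Finset.sum_neg_distrib]
      apply Finset.sum_congr rfl
      intro i hi
      simp at hi
      simp [hi.2]
    have h3 := Finset.sum_sdiff_sub_sum_sdiff (s₁ := T) (s₂ := S) (f := g)
    rw [h1, h2, ← sub_eq_add_neg, h3, hST, sub_self]

/-- Monotonicity of the zero-subsum property in the length. -/
theorem mono_aux {G : Type*} [AddCommGroup G] (A : Set ℤ) {l L : ℕ} (hlL : l ≤ L)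
    (h : ∀ g : Fin l → G, HasWZS A g) (g : Fin L → G) : HasWZS A g := by
  classical
  obtain ⟨I, a, hI, ha, hs⟩ := h (fun i => g (Fin.castLE hlL i))
  refine ⟨I.map (Fin.castLEEmb hlL), fun j => if hj : j.1 < l then a ⟨j.1, hj⟩ else 0, ?_, ?_, ?_⟩
  · simpa using hI
  · intro j hj
    simp only [Finset.mem_map] at hj
    obtain ⟨i, hi, rfl⟩ := hj
    simpa using ha i hi
  · rw [Finset.sum_map]
    simpa using hs

theorem lower_aux {G : Type*} [AddCommGroup G] {L : ℕ} (g : Fin L → G)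
    (hg : ∀ e : Fin L → ℤ, (∀ i, -1 ≤ e i ∧ e i ≤ 1) → ∑ i, e i • g i = 0 → ∀ i, e i = 0) :
    ¬ HasWZS ({1, -1} : Set ℤ) g := by
  classical
  rintro ⟨I, a, ⟨i, hi⟩, ha, hs⟩
  have := hg (fun i => if i ∈ I then a i else 0) (by
    intro j
    by_cases hj : j ∈ I
    · rcases ha j hj with h | h
      · simp [hj, h]
      · simp at h; simp [hj, h]
    · simp [hj]) (by
    simpa [ite_smul] using hs) i
  simp [hi] at this
  rcases ha i hi with h | h
  · omega
  · simp at h; omega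

theorem pow_aux (m : ℕ) : ∀ (e : Fin m → ℤ), (∀ i, -1 ≤ e i ∧ e i ≤ 1) →
    (|∑ i, e i * 2 ^ (i : ℕ)| < 2 ^ m ∧ (∑ i, e i * 2 ^ (i : ℕ) = 0 → ∀ i, e i = 0)) := by
  induction m with
  | zero => intro e _; simp
  | succ m ih =>
    intro e he
    obtain ⟨h1, h2⟩ := ih (fun i => e i.castSucc) (fun i => he _)
    rw [Fin.sum_univ_castSucc]
    simp only [Fin.val_castSucc, Fin.val_last]
    have hl := he (Fin.last m)
    rw [abs_lt] at h1 ⊢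
    have h3 : e (Fin.last m) = -1 ∨ e (Fin.last m) = 0 ∨ e (Fin.last m) = 1 := by omega
    rw [pow_succ]
    refine ⟨?_, ?_⟩
    · rcases h3 with h | h | h <;> rw [h] <;> constructor <;> linarith
    · intro h0
      have hlast : e (Fin.last m) = 0 := by
        rcases h3 with h | h | h
        · rw [h] at h0; linarith
        · exact h
        · rw [h] at h0; linarith
      rw [hlast] at h0
      have h4 := h2 (by linarith)
      intro i
      refine Fin.lastCases hlast h4 i

theorem sum_snd (m N : ℕ) (e : Fin m → ℤ) :
    ∑ i, e i • ((0, ((2 ^ (i : ℕ) : ℤ) : ZMod N)) : ZMod 3 × ZMod N) =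
      (0, ((∑ i, e i * 2 ^ (i : ℕ) : ℤ) : ZMod N)) := by
  ext
  · simp [Prod.fst_sum]
  · simp [Prod.snd_sum]

theorem case_one (n k : ℕ) (hk : 2 ^ k ≤ 3 * n) :
    ∃ g : Fin (k + 1) → ZMod 3 × ZMod (3 * n), ¬ HasWZS ({1, -1} : Set ℤ) g := by
  refine ⟨Fin.cons (1, 0) (fun i : Fin k => (0, ((2 ^ (i : ℕ) : ℤ) : ZMod (3 * n)))), ?_⟩
  apply lower_aux
  intro e he hs
  obtain ⟨hb, hz⟩ := pow_aux k (fun i => e i.succ) (fun i => he _)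
  rw [Fin.sum_univ_succ] at hs
  simp only [Fin.cons_zero, Fin.cons_succ] at hs
  rw [sum_snd] at hs
  set s := ∑ i : Fin k, e i.succ * 2 ^ (i : ℕ) with hsdef
  rw [Prod.ext_iff] at hs
  obtain ⟨hs1, hs2⟩ := hs
  have hs1' : ((e 0 : ℤ) : ZMod 3) = 0 := by simpa using hs1
  have hs2' : ((s : ℤ) : ZMod (3 * n)) = 0 := by simpa using hs2
  rw [ZMod.intCast_zmod_eq_zero_iff_dvd] at hs1'
  rw [ZMod.intCast_zmod_eq_zero_iff_dvd] at hs2'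
  have h0 := he 0
  have hk' : (2 : ℤ) ^ k ≤ ((3 * n : ℕ) : ℤ) := by exact_mod_cast hk
  have e0 : e 0 = 0 := by omega
  have s0 : s = 0 := Int.eq_zero_of_abs_lt_dvd hs2' (by linarith)
  intro i
  refine Fin.cases e0 (hz s0) i

theorem case_two (n m : ℕ) (hm : 1 ≤ m) (hk : 2 ^ m ≤ n) :
    ∃ g : Fin (m + 3) → ZMod 3 × ZMod (3 * n), ¬ HasWZS ({1, -1} : Set ℤ) g := by
  have hm2 : 2 ≤ 2 ^ m := by
    calc 2 = 2 ^ 1 := by norm_num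
      _ ≤ 2 ^ m := Nat.pow_le_pow_right (by norm_num) hm
  obtain ⟨α, hα1, hα2⟩ : ∃ α : ℕ, 2 ^ m ≤ 3 * α ∧ 3 * α + 2 ^ m ≤ 3 * n := by
    generalize 2 ^ m = P at *
    exact ⟨(P + 2) / 3, by omega, by omega⟩
  refine ⟨Fin.cons (1, ((α : ℤ) : ZMod (3 * n))) (Fin.cons (1, ((α + n : ℤ) : ZMod (3 * n)))
    (Fin.cons (1, ((α + 2 * n : ℤ) : ZMod (3 * n)))
    (fun i : Fin m => (0, ((2 ^ (i : ℕ) : ℤ) : ZMod (3 * n)))))), ?_⟩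
  apply lower_aux
  intro e he hs
  obtain ⟨hb, hz⟩ := pow_aux m (fun i => e i.succ.succ.succ) (fun i => he _)
  rw [Fin.sum_univ_succ, Fin.sum_univ_succ, Fin.sum_univ_succ] at hs
  simp only [Fin.cons_zero, Fin.cons_succ] at hs
  rw [sum_snd] at hs
  set s := ∑ i : Fin m, e i.succ.succ.succ * 2 ^ (i : ℕ) with hsdef
  rw [Prod.ext_iff] at hs
  obtain ⟨hs1, hs2⟩ := hs
  have ha := he 0
  have hb' := he (Fin.succ 0)
  have hc := he (Fin.succ (Fin.succ 0))
  have key : e 0 = 0 ∧ e (Fin.succ 0) = 0 ∧ e (Fin.succ (Fin.succ 0)) = 0 ∧ s = 0 := by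
    generalize e 0 = a at *
    generalize e (Fin.succ 0) = b at *
    generalize e (Fin.succ (Fin.succ 0)) = c at *
    have hs1' : ((a + b + c : ℤ) : ZMod 3) = 0 := by
      refine Eq.trans ?_ hs1; simp; ring
    have hs2' : ((a * α + b * (α + n) + c * (α + 2 * n) + s : ℤ) : ZMod (3 * n)) = 0 := by
      refine Eq.trans ?_ hs2; simp; ring
    rw [ZMod.intCast_zmod_eq_zero_iff_dvd] at hs1'
    rw [ZMod.intCast_zmod_eq_zero_iff_dvd] at hs2'
    obtain ⟨t, ht⟩ := hs2'
    clear hs1 hs2 hz he hsdef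
    clear_value s
    rw [abs_lt] at hb
    have hk' : (2 : ℤ) ^ m ≤ n := by exact_mod_cast hk
    have hα1' : (2 : ℤ) ^ m ≤ 3 * α := by exact_mod_cast hα1
    have hα2' : 3 * (α : ℤ) + 2 ^ m ≤ 3 * n := by exact_mod_cast hα2
    have hm2' : (2 : ℤ) ≤ 2 ^ m := by exact_mod_cast hm2
    clear hk hα1 hα2 hm2
    push_cast at ht
    generalize (2 : ℤ) ^ m = P at *
    generalize (n : ℤ) = N at *
    generalize (α : ℤ) = x at *
    obtain ⟨a1, a2⟩ := ha
    obtain ⟨b1, b2⟩ := hb'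
    obtain ⟨c1, c2⟩ := hc
    have hT : -3 < t ∧ t < 3 := by
      constructor
      · by_contra hcon
        have : 3 * N * t ≤ 3 * N * (-3) := by
          apply mul_le_mul_of_nonneg_left <;> linarith
        interval_cases a <;> interval_cases b <;> interval_cases c <;> omega
      · by_contra hcon
        have : 3 * N * 3 ≤ 3 * N * t := by
          apply mul_le_mul_of_nonneg_left <;> linarith
        interval_cases a <;> interval_cases b <;> interval_cases c <;> omega
    obtain ⟨t1, t2⟩ := hT
    interval_cases t <;> interval_cases a <;> interval_cases b <;> interval_cases c <;> omega
  obtain ⟨k0, k1, k2, ks⟩ := key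
  intro i
  refine Fin.cases k0 (fun i => ?_) i
  refine Fin.cases k1 (fun i => ?_) i
  exact Fin.cases k2 (hz ks) i

theorem stmt11 (n : ℕ) (hn : 2 ≤ n)
    (h : Int.fract (Real.logb 2 (3 * (n : ℝ))) < 1 - Int.fract (Real.logb 2 3) ∨
         Int.fract (Real.logb 2 3) ≤ Int.fract (Real.logb 2 (3 * (n : ℝ)))) :
    (Davpm (ZMod 3 × ZMod (3 * n)) : ℤ) = ⌊Real.logb 2 (9 * (n : ℝ))⌋ + 1 := by
  have hn0 : (0 : ℝ) < n := by exact_mod_cast (by omega : 0 < n)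
  haveI : NeZero (3 * n) := ⟨by omega⟩
  have fl : ∀ r : ℕ, ⌊Real.logb 2 (r : ℝ)⌋ = (Nat.log 2 r : ℤ) := by
    intro r
    have := Real.floor_logb_natCast (b := 2) (r := (r : ℝ)) (by positivity)
    rw [Int.log_natCast] at this
    exact_mod_cast this
  have f9 : ⌊Real.logb 2 (9 * (n : ℝ))⌋ = (Nat.log 2 (9 * n) : ℤ) := by
    rw [← fl]; push_cast; rfl
  have f3n : ⌊Real.logb 2 (3 * (n : ℝ))⌋ = (Nat.log 2 (3 * n) : ℤ) := by
    rw [← fl]; push_cast; rfl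
  have f3 : ⌊Real.logb 2 3⌋ = 1 := by
    have h1 := fl 3
    have h2 : Nat.log 2 3 = 1 := by
      rw [Nat.log_eq_iff (by norm_num)]; norm_num
    rw [h2] at h1
    exact_mod_cast h1
  rw [f9]
  set k := Nat.log 2 (3 * n) with hkdef
  have hk1 : 2 ^ k ≤ 3 * n := Nat.pow_log_le_self 2 (by omega)
  have hk2 : 3 * n < 2 ^ (k + 1) := Nat.lt_pow_succ_log_self (by norm_num) _
  -- a long sequence without zero-subsum
  obtain ⟨L, hL, g, hg⟩ : ∃ L, 9 * n < 2 ^ (L + 1) ∧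
      ∃ g : Fin L → ZMod 3 × ZMod (3 * n), ¬ HasWZS ({1, -1} : Set ℤ) g := by
    unfold Int.fract at h
    rw [f3n, f3] at h
    push_cast at h
    rcases h with h | h
    · refine ⟨k + 1, ?_, case_one n k hk1⟩
      have h1 : Real.logb 2 (9 * (n : ℝ)) < ((k + 2 : ℕ) : ℝ) := by
        have : (9 * (n : ℝ)) = 3 * (3 * n) := by ring
        rw [this, Real.logb_mul (by norm_num) (by positivity)]
        push_cast
        linarith
      rw [Real.logb_lt_iff_lt_rpow (by norm_num) (by positivity), Real.rpow_natCast] at h1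
      exact_mod_cast h1
    · have h1 : 3 * 2 ^ k ≤ 2 * (3 * n) := by
        have h2 : Real.logb 2 (3 * 2 ^ k) ≤ Real.logb 2 (2 * (3 * n)) := by
          rw [Real.logb_mul (by norm_num) (by positivity),
            Real.logb_mul (by norm_num) (by positivity), Real.logb_pow,
            Real.logb_self_eq_one (by norm_num)]
          linarith
        rw [Real.logb_le_logb (by norm_num) (by positivity) (by positivity)] at h2
        exact_mod_cast h2
      have hk0 : 2 ≤ k := by
        by_contra hcon
        have : 2 ^ (k + 1) ≤ 2 ^ 2 := Nat.pow_le_pow_right (by norm_num) (by omega)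
        omega
      obtain ⟨m, hm⟩ : ∃ m, k = m + 1 := ⟨k - 1, by omega⟩
      rw [hm] at h1 hk2
      refine ⟨m + 3, ?_, case_two n m (by omega) ?_⟩
      · simp only [pow_succ] at *; omega
      · simp only [pow_succ] at *; omega
  have hlogL : Nat.log 2 (9 * n) ≤ L := by
    have := Nat.log_lt_of_lt_pow (by omega) hL
    omega
  have hup : ∀ g : Fin (Nat.log 2 (9 * n) + 1) → ZMod 3 × ZMod (3 * n),
      HasWZS ({1, -1} : Set ℤ) g := by
    apply upper_aux
    rw [Fintype.card_prod, ZMod.card, ZMod.card]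
    have := Nat.lt_pow_succ_log_self (b := 2) (by norm_num) (9 * n)
    calc 3 * (3 * n) = 9 * n := by ring
      _ < _ := this
  have hle : Davpm (ZMod 3 × ZMod (3 * n)) ≤ Nat.log 2 (9 * n) + 1 := Nat.sInf_le hup
  have hmem : ∀ g : Fin (Davpm (ZMod 3 × ZMod (3 * n))) → ZMod 3 × ZMod (3 * n),
      HasWZS ({1, -1} : Set ℤ) g :=
    Nat.sInf_mem (s := {l : ℕ | ∀ g : Fin l → ZMod 3 × ZMod (3 * n),
      HasWZS ({1, -1} : Set ℤ) g}) ⟨_, hup⟩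
  have hge : L < Davpm (ZMod 3 × ZMod (3 * n)) := by
    by_contra hcon
    exact hg (mono_aux _ (by omega) hmem g)
  omega
end

section
/- Let G be a nontrivial finite abelian group with exponent n. Then the fully weighted Davenport constant satisfies D_{ℤ∖nℤ}(G) = rank_n(G) + 1, where the set of weights is the set of all integers not divisible by n, and rank_n(G) is the n-rank of G. -/
open Finset

/-- A family of nonzero elements is independent if `∑ i, a i • f i = 0` with integer
coefficients forces `a i • f i = 0` for every `i`. -/
def IsIndepFam {G : Type*} [AddCommGroup G] {k : ℕ} (f : Fin k → G) : Prop :=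
  (∀ i, f i ≠ 0) ∧ ∀ a : Fin k → ℤ, ∑ i, a i • f i = 0 → ∀ i, a i • f i = 0

/-- The `n`-rank of `G`: the maximal cardinality of an independent family of elements
of order `n` in `G`. -/
noncomputable def nRank (G : Type*) [AddCommGroup G] (n : ℕ) : ℕ :=
  sSup {k : ℕ | ∃ f : Fin k → G, (∀ i, addOrderOf (f i) = n) ∧ IsIndepFam f}

/-- No weighted zero-subsum: every relation has all coefficients divisible by `n`. -/
def FreeFam {G : Type*} [AddCommGroup G] (n : ℕ) {k : ℕ} (f : Fin k → G) : Prop :=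
  ∀ a : Fin k → ℤ, ∑ i, a i • f i = 0 → ∀ i, (n : ℤ) ∣ a i

theorem smul_zero_of_dvd {G : Type*} [AddCommGroup G] (a : ℤ) (g : G)
    (h : (AddMonoid.exponent G : ℤ) ∣ a) : a • g = 0 :=
  addOrderOf_dvd_iff_zsmul_eq_zero.1
    ((Int.natCast_dvd_natCast.2 (AddMonoid.addOrder_dvd_exponent g)).trans h)

theorem not_hasWZS_iff {G : Type*} [AddCommGroup G] {k : ℕ} (f : Fin k → G) :
    ¬ HasWZS {a : ℤ | ¬ ((AddMonoid.exponent G : ℤ) ∣ a)} f ↔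
      FreeFam (AddMonoid.exponent G) f := by
  classical
  constructor
  · intro h a ha i
    by_contra hi
    refine h ⟨Finset.univ.filter (fun i => ¬ (AddMonoid.exponent G : ℤ) ∣ a i), a,
      ⟨i, by simpa using hi⟩, by simp, ?_⟩
    rw [← ha]
    apply Finset.sum_subset (Finset.subset_univ _)
    intro j _ hj
    exact smul_zero_of_dvd _ _ (by simpa using hj)
  · rintro h ⟨I, a, ⟨i, hi⟩, hA, hs⟩
    have := h (fun j => if j ∈ I then a j else 0) (by simpa [ite_smul] using hs) i
    simp only [hi, if_true] at this
    exact hA i hi this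

theorem free_iff {G : Type*} [AddCommGroup G] [Fintype G] [Nontrivial G]
    {k : ℕ} (f : Fin k → G) :
    ((∀ i, addOrderOf (f i) = AddMonoid.exponent G) ∧ IsIndepFam f) ↔
      FreeFam (AddMonoid.exponent G) f := by
  classical
  constructor
  · rintro ⟨ho, _, hi⟩ a ha i
    rw [← ho i]
    exact addOrderOf_dvd_iff_zsmul_eq_zero.2 (hi a ha i)
  · intro h
    have key : ∀ i, addOrderOf (f i) = AddMonoid.exponent G := by
      intro i
      apply Nat.dvd_antisymm (AddMonoid.addOrder_dvd_exponent _)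
      have := h (Pi.single i (addOrderOf (f i) : ℤ))
        (by simp [Pi.single_apply, ite_smul, addOrderOf_nsmul_eq_zero]) i
      simpa [Int.natCast_dvd_natCast] using this
    refine ⟨key, ?_, fun a ha i => smul_zero_of_dvd _ _ (h a ha i)⟩
    intro i hi
    have h1 := key i
    rw [hi, addOrderOf_zero] at h1
    have := AddMonoid.exp_eq_one_iff.1 h1.symm
    exact not_subsingleton G this

theorem free_card {G : Type*} [AddCommGroup G] [Fintype G] [Nontrivial G]
    {k : ℕ} (f : Fin k → G) (h : FreeFam (AddMonoid.exponent G) f) :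
    k ≤ Fintype.card G := by
  classical
  have hinj : Function.Injective f := by
    intro i j hij
    by_contra hne
    have := h (Pi.single i 1 - Pi.single j 1)
      (by simp [sub_smul, Finset.sum_sub_distrib, Pi.single_apply, ite_smul, hij]) i
    simp [hne] at this
    have h1 : AddMonoid.exponent G = 1 := by
      first
        | exact this
        | exact Nat.dvd_one.1 (by exact_mod_cast this)
        | exact Int.natCast_dvd_natCast.1 this
        | simpa [Int.isUnit_iff] using this
    exact not_subsingleton G (AddMonoid.exp_eq_one_iff.1 h1)
  simpa using Fintype.card_le_of_injective f hinj

theorem free_pred {G : Type*} [AddCommGroup G] {n k : ℕ} (f : Fin (k + 1) → G)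
    (h : FreeFam n f) : FreeFam n (fun i : Fin k => f i.succ) := by
  intro a ha i
  have := h (Fin.cons 0 a) (by simpa [Fin.sum_univ_succ] using ha) i.succ
  simpa using this

theorem stmt13 (G : Type) [AddCommGroup G] [Fintype G] [Nontrivial G] :
    DavW {a : ℤ | ¬ ((AddMonoid.exponent G : ℤ) ∣ a)} G
      = nRank G (AddMonoid.exponent G) + 1 := by
  set S : Set ℕ := {k | ∃ f : Fin k → G, FreeFam (AddMonoid.exponent G) f} with hS
  have e1 : nRank G (AddMonoid.exponent G) = sSup S := by
    simp only [nRank, free_iff, hS]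
  have e2 : DavW {a : ℤ | ¬ ((AddMonoid.exponent G : ℤ) ∣ a)} G = sInf Sᶜ := by
    unfold DavW
    congr 1
    ext l
    simp only [hS, Set.mem_compl_iff, Set.mem_setOf_eq, ← not_hasWZS_iff, not_exists, not_not]
  have hb : BddAbove S := ⟨Fintype.card G, by rintro k ⟨f, hf⟩; exact free_card f hf⟩
  have h0 : (0 : ℕ) ∈ S := ⟨Fin.elim0, fun _ _ i => i.elim0⟩
  have hmax : sSup S ∈ S := Nat.sSup_mem ⟨0, h0⟩ hb
  have hdown : ∀ m k, k + m ∈ S → k ∈ S := by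
    intro m
    induction m with
    | zero => intro k h; exact h
    | succ m ih =>
      rintro k ⟨f, hf⟩
      exact ih k ⟨_, free_pred (k := k + m) f hf⟩
  have hnot : sSup S + 1 ∈ Sᶜ := fun h => by
    have := le_csSup hb h
    omega
  rw [e1, e2]
  apply le_antisymm (Nat.sInf_le hnot)
  by_contra hlt
  have hm : sInf Sᶜ ∈ Sᶜ := Nat.sInf_mem ⟨_, hnot⟩
  apply hm
  apply hdown (sSup S - sInf Sᶜ)
  have : sInf Sᶜ + (sSup S - sInf Sᶜ) = sSup S := by omega
  rw [this]
  exact hmax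
end

section
/- D_±(C_3 ⊕ C_3 ⊕ C_9) = 6. -/
open Finset

/-- Signed zero-sum formulation: coefficients in `{-1,0,1}`, not all zero. -/
def SZS {G : Type*} [AddCommGroup G] {n : ℕ} (g : Fin n → G) : Prop :=
  ∃ e : Fin n → ℤ, (∀ i, -1 ≤ e i ∧ e i ≤ 1) ∧ (∃ i, e i ≠ 0) ∧ ∑ i, e i • g i = 0

lemma SZS.hasWZS {G : Type*} [AddCommGroup G] {n : ℕ} {g : Fin n → G} (h : SZS g) :
    HasWZS ({1, -1} : Set ℤ) g := by
  obtain ⟨e, he, ⟨i, hi⟩, hs⟩ := h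
  refine ⟨univ.filter (fun i => e i ≠ 0), e, ⟨i, by simpa using hi⟩, ?_, ?_⟩
  · intro j hj
    have h1 := he j
    have h2 : e j ≠ 0 := by simpa using hj
    simp only [Set.mem_insert_iff, Set.mem_singleton_iff]
    omega
  · rw [← hs]
    apply Finset.sum_subset (Finset.subset_univ _)
    intro j _ hj
    have h2 : e j = 0 := by simpa using hj
    rw [h2, zero_smul]

lemma HasWZS.szs {G : Type*} [AddCommGroup G] {n : ℕ} {g : Fin n → G}
    (h : HasWZS ({1, -1} : Set ℤ) g) : SZS g := by
  obtain ⟨I, a, ⟨i, hi⟩, ha, hs⟩ := h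
  refine ⟨fun j => if j ∈ I then a j else 0, ?_, ⟨i, ?_⟩, ?_⟩
  · intro j
    by_cases hj : j ∈ I
    · have := ha j hj
      simp only [Set.mem_insert_iff, Set.mem_singleton_iff] at this
      simp only [hj, if_true]
      omega
    · simp [hj]
  · have := ha i hi
    simp only [Set.mem_insert_iff, Set.mem_singleton_iff] at this
    simp only [hi, if_true]
    omega
  · rw [← hs]
    simp [ite_smul]

lemma SZS.of_perm {G : Type*} [AddCommGroup G] {n : ℕ} {g : Fin n → G} (σ : Equiv.Perm (Fin n))
    (h : SZS (g ∘ σ)) : SZS g := by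
  obtain ⟨e, he, ⟨i, hi⟩, hs⟩ := h
  refine ⟨e ∘ σ.symm, fun j => he _, ⟨σ i, by simpa using hi⟩, ?_⟩
  rw [← hs, ← Equiv.sum_comp σ]
  simp

lemma SZS.of_hom {G : Type*} [AddCommGroup G] {n : ℕ} {g : Fin n → G} (f : G →+ G)
    (hf : ∀ x, f x = 0 → x = 0) (h : SZS (f ∘ g)) : SZS g := by
  obtain ⟨e, he, hi, hs⟩ := h
  refine ⟨e, he, hi, hf _ ?_⟩
  rw [map_sum, ← hs]
  simp

/-- Pigeonhole: a sequence of length six inside a set of fewer than 64 elements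
closed under addition has a signed zero-sum. -/
lemma szs_of_small {G : Type*} [AddCommGroup G] (H : AddSubgroup G) (S : Finset G)
    (hHS : ∀ x ∈ H, x ∈ S) (hS : S.card < 64) (g : Fin 6 → G) (hg : ∀ i, g i ∈ H) : SZS g := by
  have hmaps : ∀ I ∈ (univ : Finset (Finset (Fin 6))), ∑ i ∈ I, g i ∈ S :=
    fun I _ => hHS _ (H.sum_mem fun i _ => hg i)
  have hc : S.card < (univ : Finset (Finset (Fin 6))).card := by
    simpa using hS
  obtain ⟨I, -, J, -, hne, heq⟩ := Finset.exists_ne_map_eq_of_card_lt_of_maps_to hc hmaps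
  refine ⟨fun i => (if i ∈ I then 1 else 0) - (if i ∈ J then 1 else 0), ?_, ?_, ?_⟩
  · intro i
    by_cases h1 : i ∈ I <;> by_cases h2 : i ∈ J <;> simp [h1, h2]
  · by_contra hcon
    push Not at hcon
    apply hne
    ext i
    have := hcon i
    by_cases h1 : i ∈ I <;> by_cases h2 : i ∈ J <;> simp_all
  · simp [sub_smul, ite_smul, Finset.sum_sub_distrib, heq]

abbrev GG := ZMod 3 × ZMod 3 × ZMod 9

/-- `h` is in the signed span of `(0,0,1), (1,0,a), (0,1,c)` (Boolean test on lifts). -/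
def memB (a c X Y Z : ℕ) : Bool :=
  Nat.ble (Nat.mod (Nat.add (Nat.add (Nat.add Z 1) (Nat.mul (Nat.mul 8 a) (Nat.pow X 3)))
    (Nat.mul (Nat.mul 8 c) (Nat.pow Y 3))) 9) 2

lemma memB_eq (a c X Y Z : ℕ) :
    memB a c X Y Z = Nat.ble ((Z + 1 + 8 * a * X ^ 3 + 8 * c * Y ^ 3) % 9) 2 := rfl

def lin3 (p q r x y z : ℕ) : ℕ := Nat.add (Nat.add (Nat.mul p x) (Nat.mul q y)) (Nat.mul r z)

lemma lin3_eq (p q r x y z : ℕ) : lin3 p q r x y z = p * x + q * y + r * z := rfl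

def combB (a c p q r : ℕ) (g h k : ℕ × ℕ × ℕ) : Bool :=
  memB a c (lin3 p q r g.1 h.1 k.1) (lin3 p q r g.2.1 h.2.1 k.2.1) (lin3 p q r g.2.2 h.2.2 k.2.2)

def listV (a c : ℕ) : List (ℕ × ℕ × ℕ) :=
  [0, 1, 2].flatMap fun x => [0, 1, 2].flatMap fun y => [0, 1, 2].map fun t =>
    (x, y, Nat.add (Nat.add (Nat.add 2 t) (Nat.mul a (Nat.pow x 3))) (Nat.mul c (Nat.pow y 3)))

def pairB (a c : ℕ) (g h : ℕ × ℕ × ℕ) : Bool :=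
  combB a c 1 1 0 g h (0, 0, 0) || combB a c 1 8 0 g h (0, 0, 0)

def tripleB (a c : ℕ) (g h k : ℕ × ℕ × ℕ) : Bool :=
  [0, 1, 8].any fun p => [0, 1, 8].any fun q => combB a c p q 1 g h k

def checkB (a c : ℕ) : Bool :=
  (listV a c).all fun g => (listV a c).all fun h =>
    pairB a c g h || (listV a c).all fun k => tripleB a c g h k

lemma checkB_one : checkB 1 1 = true := by
  decide +kernel

lemma combB_zero (a c p q : ℕ) (g h k k' : ℕ × ℕ × ℕ) :
    combB a c p q 0 g h k = combB a c p q 0 g h k' := by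
  simp [combB, lin3_eq]

/-- A general element of `listV a c`. -/
def mkV (a c x y t : ℕ) : ℕ × ℕ × ℕ := (x, y, 2 + t + a * x ^ 3 + c * y ^ 3)

lemma mem_listV (a c : ℕ) (v : ℕ × ℕ × ℕ) :
    v ∈ listV a c ↔ ∃ x ∈ [0, 1, 2], ∃ y ∈ [0, 1, 2], ∃ t ∈ [0, 1, 2], mkV a c x y t = v := by
  simp only [listV, List.mem_flatMap, List.mem_map]
  rfl

lemma cube_eq (m n : ℕ) (h : m ≡ n [MOD 3]) : (m : ZMod 9) ^ 3 = (n : ZMod 9) ^ 3 := by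
  have cube : ∀ X : ℕ, (((X % 3 : ℕ) : ZMod 9)) ^ 3 = (X : ZMod 9) ^ 3 := by
    intro X
    conv_rhs => rw [← Nat.div_add_mod X 3]
    push_cast
    generalize ((X / 3 : ℕ) : ZMod 9) = k
    generalize ((X % 3 : ℕ) : ZMod 9) = r
    revert k r
    decide
  rw [← cube m, ← cube n, h]

/-- The carry cubic only depends on `a` through `a * x`. -/
lemma carry_eq (a p q r x1 x2 x3 : ℕ) :
    (p : ZMod 9) * (a * x1 ^ 3) + q * (a * x2 ^ 3) + r * (a * x3 ^ 3)
        + 8 * a * (p * x1 + q * x2 + r * x3) ^ 3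
      = p * ((a * x1 % 3 : ℕ) : ZMod 9) ^ 3 + q * ((a * x2 % 3 : ℕ) : ZMod 9) ^ 3
        + r * ((a * x3 % 3 : ℕ) : ZMod 9) ^ 3
        + 8 * (p * ((a * x1 % 3 : ℕ) : ZMod 9) + q * ((a * x2 % 3 : ℕ) : ZMod 9)
          + r * ((a * x3 % 3 : ℕ) : ZMod 9)) ^ 3 := by
  have h1 := cube_eq _ _ (Nat.mod_modEq (a * x1) 3)
  have h2 := cube_eq _ _ (Nat.mod_modEq (a * x2) 3)
  have h3 := cube_eq _ _ (Nat.mod_modEq (a * x3) 3)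
  have h4 := cube_eq (p * (a * x1 % 3) + q * (a * x2 % 3) + r * (a * x3 % 3))
    (p * (a * x1) + q * (a * x2) + r * (a * x3))
    ((((Nat.mod_modEq _ 3).mul_left p).add ((Nat.mod_modEq _ 3).mul_left q)).add
      ((Nat.mod_modEq _ 3).mul_left r))
  push_cast at h1 h2 h3 h4
  rw [h1, h2, h3, h4]
  have hD : 3 ∣ p * x1 ^ 3 + q * x2 ^ 3 + r * x3 ^ 3 + 8 * (p * x1 + q * x2 + r * x3) ^ 3 := by
    have hc : ∀ x : ZMod 3, x ^ 3 = x := by decide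
    have h9 : (9 : ZMod 3) = 0 := by decide
    rw [← ZMod.natCast_eq_zero_iff]
    push_cast
    rw [hc, hc, hc, hc]
    linear_combination ((p : ZMod 3) * x1 + q * x2 + r * x3) * h9
  obtain ⟨m, hm⟩ := hD
  have hm' := congrArg (Nat.cast : ℕ → ZMod 9) hm
  push_cast at hm'
  have ha : ∀ a : ZMod 9, (a ^ 3 - a) * 3 = 0 := by decide
  linear_combination ((a : ZMod 9) - a ^ 3) * hm' - m * ha a

lemma combB_transfer (a c p q r x1 y1 t1 x2 y2 t2 x3 y3 t3 : ℕ) :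
    combB a c p q r (mkV a c x1 y1 t1) (mkV a c x2 y2 t2) (mkV a c x3 y3 t3)
      = combB 1 1 p q r (mkV 1 1 (a * x1 % 3) (c * y1 % 3) t1)
        (mkV 1 1 (a * x2 % 3) (c * y2 % 3) t2) (mkV 1 1 (a * x3 % 3) (c * y3 % 3) t3) := by
  simp only [combB, memB_eq, lin3_eq, mkV]
  congr 1
  rw [← ZMod.natCast_eq_natCast_iff']
  push_cast
  linear_combination carry_eq a p q r x1 x2 x3 + carry_eq c p q r y1 y2 y3

lemma natmod3 (X : ℕ) : ∃ e : ℤ, -1 ≤ e ∧ e ≤ 1 ∧ (3 : ℤ) ∣ X - e ∧ (9 : ℤ) ∣ (X : ℤ) ^ 3 - e := by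
  have h : X % 3 = 0 ∨ X % 3 = 1 ∨ X % 3 = 2 := by omega
  have hX : (X : ℤ) = 3 * ((X / 3 : ℕ) : ℤ) + ((X % 3 : ℕ) : ℤ) := by omega
  generalize ((X / 3 : ℕ) : ℤ) = k at hX
  rcases h with h | h | h <;> rw [h] at hX <;> rw [hX]
  · exact ⟨0, by norm_num, by norm_num, ⟨k, by push_cast; ring⟩, ⟨3 * k ^ 3, by push_cast; ring⟩⟩
  · exact ⟨1, by norm_num, by norm_num, ⟨k, by push_cast; ring⟩,
      ⟨3 * k ^ 3 + 3 * k ^ 2 + k, by push_cast; ring⟩⟩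
  · exact ⟨-1, by norm_num, by norm_num, ⟨k + 1, by push_cast; ring⟩,
      ⟨3 * k ^ 3 + 6 * k ^ 2 + 4 * k + 1, by push_cast; ring⟩⟩

lemma zmod_eq_of_dvd (n : ℕ) (x y : ℤ) (h : (n : ℤ) ∣ x - y) : (x : ZMod n) = (y : ZMod n) := by
  rw [ZMod.intCast_eq_intCast_iff_dvd_sub]
  rw [← neg_sub]
  exact (dvd_neg).2 h

lemma memB_sound (a c X Y Z : ℕ) (h : memB a c X Y Z = true) :
    ∃ e0 e1 e2 : ℤ, (-1 ≤ e0 ∧ e0 ≤ 1) ∧ (-1 ≤ e1 ∧ e1 ≤ 1) ∧ (-1 ≤ e2 ∧ e2 ≤ 1) ∧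
      ((X : ZMod 3), (Y : ZMod 3), (Z : ZMod 9)) =
        e0 • ((0, 0, 1) : GG) + e1 • ((1, 0, (a : ZMod 9)) : GG)
          + e2 • ((0, 1, (c : ZMod 9)) : GG) := by
  obtain ⟨e1, h1, h1', hX, hX3⟩ := natmod3 X
  obtain ⟨e2, h2, h2', hY, hY3⟩ := natmod3 Y
  have h' : (Z + 1 + 8 * a * X ^ 3 + 8 * c * Y ^ 3) % 9 ≤ 2 := by
    rw [memB_eq] at h; exact Nat.le_of_ble_eq_true h
  set m := (Z + 1 + 8 * a * X ^ 3 + 8 * c * Y ^ 3) % 9 with hm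
  have hdiv : (9 : ℤ) ∣ ((Z : ℤ) + 1 + 8 * a * X ^ 3 + 8 * c * Y ^ 3) - m := by
    rw [hm]; push_cast; exact Int.dvd_self_sub_emod
  refine ⟨(m : ℤ) - 1, e1, e2, ⟨by omega, by omega⟩, ⟨h1, h1'⟩, ⟨h2, h2'⟩, ?_⟩
  have eX := zmod_eq_of_dvd 3 X e1 (by exact_mod_cast hX)
  have eY := zmod_eq_of_dvd 3 Y e2 (by exact_mod_cast hY)
  have eZ := zmod_eq_of_dvd 9 Z ((m : ℤ) - 1 + e1 * a + e2 * c) (by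
    obtain ⟨u, hu⟩ := hdiv
    obtain ⟨v, hv⟩ := hX3
    obtain ⟨w, hw⟩ := hY3
    refine ⟨u - a * X ^ 3 - c * Y ^ 3 + a * v + c * w, ?_⟩
    push_cast
    linear_combination hu + a * hv + c * hw)
  push_cast at eX eY eZ
  ext <;> simp [eX, eY, eZ]

lemma rep (a c : ℕ) (h : GG) :
    (∃ X Y Z : ℕ, h = ((X : ZMod 3), (Y : ZMod 3), (Z : ZMod 9)) ∧ memB a c X Y Z = true) ∨
    ∃ s : ℤ, (s = 1 ∨ s = -1) ∧ ∃ v ∈ listV a c,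
      s • h = ((v.1 : ZMod 3), (v.2.1 : ZMod 3), (v.2.2 : ZMod 9)) := by
  obtain ⟨X, Y, Z⟩ := h
  obtain ⟨X, rfl⟩ := ZMod.natCast_zmod_surjective X
  obtain ⟨Y, rfl⟩ := ZMod.natCast_zmod_surjective Y
  obtain ⟨Z, rfl⟩ := ZMod.natCast_zmod_surjective Z
  have key : ∀ X Y Z : ℕ, 3 ≤ (Z + 1 + 8 * a * X ^ 3 + 8 * c * Y ^ 3) % 9 →
      (Z + 1 + 8 * a * X ^ 3 + 8 * c * Y ^ 3) % 9 ≤ 5 → ∃ v ∈ listV a c,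
      (((X : ZMod 3), (Y : ZMod 3), (Z : ZMod 9)) : GG)
        = ((v.1 : ZMod 3), (v.2.1 : ZMod 3), (v.2.2 : ZMod 9)) := by
    intro X Y Z h1 h2
    set m := (Z + 1 + 8 * a * X ^ 3 + 8 * c * Y ^ 3) % 9 with hm
    refine ⟨(X % 3, Y % 3, 2 + (m - 3) + a * (X % 3) ^ 3 + c * (Y % 3) ^ 3), ?_, ?_⟩
    · simp only [listV, List.mem_flatMap, List.mem_map]
      refine ⟨X % 3, ?_, Y % 3, ?_, m - 3, ?_, rfl⟩ <;>
        simp only [List.mem_cons, List.not_mem_nil, or_false] <;> omega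
    · have cube : ∀ X : ℕ, (((X % 3 : ℕ) : ZMod 9)) ^ 3 = (X : ZMod 9) ^ 3 := by
        intro X
        conv_rhs => rw [← Nat.div_add_mod X 3]
        push_cast
        generalize ((X / 3 : ℕ) : ZMod 9) = k
        generalize ((X % 3 : ℕ) : ZMod 9) = r
        revert k r
        decide
      have hmz : ((m : ℕ) : ZMod 9) = Z + 1 + 8 * a * X ^ 3 + 8 * c * Y ^ 3 := by
        rw [hm, ZMod.natCast_mod]; push_cast; rfl
      have h9 : (9 : ZMod 9) = 0 := by decide
      ext
      · simp
      · simp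
      · simp only
        push_cast [Nat.cast_sub h1]
        rw [cube, cube, hmz]
        linear_combination (-(a : ZMod 9) * X ^ 3 - c * Y ^ 3) * h9
  by_cases h1 : (Z + 1 + 8 * a * X ^ 3 + 8 * c * Y ^ 3) % 9 ≤ 2
  · left
    exact ⟨X, Y, Z, rfl, by rw [memB_eq]; exact Nat.ble_eq_true_of_le h1⟩
  · right
    by_cases h2 : (Z + 1 + 8 * a * X ^ 3 + 8 * c * Y ^ 3) % 9 ≤ 5
    · refine ⟨1, Or.inl rfl, ?_⟩
      rw [one_smul]
      exact key X Y Z (by omega) h2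
    · refine ⟨-1, Or.inr rfl, ?_⟩
      have e3 : (8 : ZMod 3) = -1 := by decide
      have e9 : (8 : ZMod 9) = -1 := by decide
      have := key (8 * X) (8 * Y) (8 * Z)
      have hx : 8 * Z + 1 + 8 * a * (8 * X) ^ 3 + 8 * c * (8 * Y) ^ 3
        = 8 * Z + 1 + 8 * (512 * (a * X ^ 3)) + 8 * (512 * (c * Y ^ 3)) := by ring
      have hy : Z + 1 + 8 * a * X ^ 3 + 8 * c * Y ^ 3
        = Z + 1 + 8 * (a * X ^ 3) + 8 * (c * Y ^ 3) := by ring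
      rw [hx] at this
      rw [hy] at h1 h2
      have hT : (8 * Z + 1 + 8 * (512 * (a * X ^ 3)) + 8 * (512 * (c * Y ^ 3))) + 7
        = 8 * (Z + 1 + 8 * (a * X ^ 3) + 8 * (c * Y ^ 3))
          + 9 * (448 * (a * X ^ 3 + c * Y ^ 3)) := by ring
      generalize 8 * Z + 1 + 8 * (512 * (a * X ^ 3)) + 8 * (512 * (c * Y ^ 3)) = T at this hT
      generalize Z + 1 + 8 * (a * X ^ 3) + 8 * (c * Y ^ 3) = S at h1 h2 hT
      generalize 448 * (a * X ^ 3 + c * Y ^ 3) = K at hT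
      clear key hx hy
      have hT3 : 3 ≤ T % 9 ∧ T % 9 ≤ 5 := by
        have hS : S % 9 = 6 ∨ S % 9 = 7 ∨ S % 9 = 8 := by omega
        rcases hS with hS | hS | hS <;> omega
      obtain ⟨v, hv, hveq⟩ := this hT3.1 hT3.2
      refine ⟨v, hv, ?_⟩
      rw [← hveq]
      ext <;> simp [e3, e9]

lemma comb_sound (a c p q r : ℕ) (hp : p = 0 ∨ p = 1 ∨ p = 8) (hq : q = 0 ∨ q = 1 ∨ q = 8)
    (hr : r = 0 ∨ r = 1 ∨ r = 8) (u v w : ℕ × ℕ × ℕ) (hne : p ≠ 0 ∨ q ≠ 0 ∨ r ≠ 0)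
    (g : Fin 6 → GG) (h0 : g 0 = (0, 0, 1)) (h1 : g 1 = (1, 0, (a : ZMod 9)))
    (h2 : g 2 = (0, 1, (c : ZMod 9))) (s t k : ℤ) (hs : s = 1 ∨ s = -1) (ht : t = 1 ∨ t = -1)
    (hk : k = 1 ∨ k = -1)
    (h3 : s • g 3 = ((u.1 : ZMod 3), (u.2.1 : ZMod 3), (u.2.2 : ZMod 9)))
    (h4 : t • g 4 = ((v.1 : ZMod 3), (v.2.1 : ZMod 3), (v.2.2 : ZMod 9)))
    (h5 : r = 0 ∨ k • g 5 = ((w.1 : ZMod 3), (w.2.1 : ZMod 3), (w.2.2 : ZMod 9)))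
    (hc : combB a c p q r u v w = true) : SZS g := by
  obtain ⟨e0, e1, e2, b0, b1, b2, heq⟩ := memB_sound _ _ _ _ _ hc
  have cen : ∀ p : ℕ, (p = 0 ∨ p = 1 ∨ p = 8) → ∃ d : ℤ, -1 ≤ d ∧ d ≤ 1 ∧ (p ≠ 0 → d ≠ 0) ∧
      (p = 0 → d = 0) ∧ (p : ZMod 3) = d ∧ (p : ZMod 9) = d := by
    rintro p (rfl | rfl | rfl)
    · exact ⟨0, by decide⟩
    · exact ⟨1, by decide⟩
    · exact ⟨-1, by decide⟩
  obtain ⟨dp, p1, p2, p3, p0, p4, p5⟩ := cen p hp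
  obtain ⟨dq, q1, q2, q3, q0, q4, q5⟩ := cen q hq
  obtain ⟨dr, r1, r2, r3, r0, r4, r5⟩ := cen r hr
  have hsum : dp • (s • g 3) + dq • (t • g 4) + dr • (k • g 5)
      = e0 • g 0 + e1 • g 1 + e2 • g 2 := by
    rw [h0, h1, h2, ← heq, h3, h4]
    rcases h5 with h5 | h5
    · rw [r0 h5]
      subst h5
      ext <;> simp [lin3_eq, p4, p5, q4, q5]
    · rw [h5]
      ext <;> simp [lin3_eq, p4, p5, q4, q5, r4, r5]
  refine ⟨![-e0, -e1, -e2, dp * s, dq * t, dr * k], ?_, ?_, ?_⟩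
  · intro i
    fin_cases i
    · simp; omega
    · simp; omega
    · simp; omega
    · rcases hs with rfl | rfl <;> simp <;> omega
    · rcases ht with rfl | rfl <;> simp <;> omega
    · rcases hk with rfl | rfl <;> simp <;> omega
  · rcases hne with h | h | h
    · exact ⟨3, by rcases hs with rfl | rfl <;> simpa using p3 h⟩
    · exact ⟨4, by rcases ht with rfl | rfl <;> simpa using q3 h⟩
    · exact ⟨5, by rcases hk with rfl | rfl <;> simpa using r3 h⟩
  · rw [smul_smul, smul_smul, smul_smul] at hsum
    simp only [Fin.sum_univ_six]
    simp only [Fin.isValue, Matrix.cons_val, neg_smul]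
    rw [← sub_eq_zero] at hsum
    rw [← hsum]
    abel

lemma szs_of_mem (a c : ℕ) (g : Fin 6 → GG) (h0 : g 0 = (0, 0, 1))
    (h1 : g 1 = (1, 0, (a : ZMod 9))) (h2 : g 2 = (0, 1, (c : ZMod 9))) (i : Fin 6)
    (hi0 : i ≠ 0) (hi1 : i ≠ 1) (hi2 : i ≠ 2)
    (h : ∃ X Y Z : ℕ, g i = ((X : ZMod 3), (Y : ZMod 3), (Z : ZMod 9)) ∧ memB a c X Y Z = true) :
    SZS g := by
  obtain ⟨X, Y, Z, hg, hm⟩ := h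
  obtain ⟨e0, e1, e2, b0, b1, b2, heq⟩ := memB_sound _ _ _ _ _ hm
  rw [← hg, ← h0, ← h1, ← h2] at heq
  refine ⟨fun j => if j = 0 then -e0 else if j = 1 then -e1 else if j = 2 then -e2 else
    if j = i then 1 else 0, ?_, ⟨i, by simp [hi0, hi1, hi2]⟩, ?_⟩
  · intro j
    dsimp only
    split_ifs <;> omega
  · fin_cases i <;> simp_all [Fin.sum_univ_six] <;> abel

lemma normal_case (a c : ℕ) (g : Fin 6 → GG)
    (h0 : g 0 = (0, 0, 1)) (h1 : g 1 = (1, 0, (a : ZMod 9)))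
    (h2 : g 2 = (0, 1, (c : ZMod 9))) : SZS g := by
  rcases rep a c (g 3) with h | ⟨s, hs, u, hu, h3⟩
  · exact szs_of_mem a c g h0 h1 h2 3 (by decide) (by decide) (by decide) h
  rcases rep a c (g 4) with h | ⟨t, ht, v, hv, h4⟩
  · exact szs_of_mem a c g h0 h1 h2 4 (by decide) (by decide) (by decide) h
  rcases rep a c (g 5) with h | ⟨k, hk, w, hw, h5⟩
  · exact szs_of_mem a c g h0 h1 h2 5 (by decide) (by decide) (by decide) h
  obtain ⟨x1, -, y1, -, t1, ht1, rfl⟩ := (mem_listV a c u).1 hu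
  obtain ⟨x2, -, y2, -, t2, ht2, rfl⟩ := (mem_listV a c v).1 hv
  obtain ⟨x3, -, y3, -, t3, ht3, rfl⟩ := (mem_listV a c w).1 hw
  have m3 : ∀ n : ℕ, n % 3 ∈ [0, 1, 2] := by
    intro n
    simp only [List.mem_cons, List.not_mem_nil, or_false]
    omega
  have mV : ∀ x y t : ℕ, t ∈ [0, 1, 2] → mkV 1 1 (a * x % 3) (c * y % 3) t ∈ listV 1 1 :=
    fun x y t ht => (mem_listV 1 1 _).2 ⟨_, m3 _, _, m3 _, t, ht, rfl⟩
  have H := checkB_one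
  rw [checkB, List.all_eq_true] at H
  have H := H _ (mV x1 y1 t1 ht1)
  rw [List.all_eq_true] at H
  have H := H _ (mV x2 y2 t2 ht2)
  rw [Bool.or_eq_true] at H
  have fin : ∀ p q r : ℕ, (p = 0 ∨ p = 1 ∨ p = 8) → (q = 0 ∨ q = 1 ∨ q = 8) →
      (r = 0 ∨ r = 1 ∨ r = 8) → (p ≠ 0 ∨ q ≠ 0 ∨ r ≠ 0) →
      combB 1 1 p q r (mkV 1 1 (a * x1 % 3) (c * y1 % 3) t1)
        (mkV 1 1 (a * x2 % 3) (c * y2 % 3) t2) (mkV 1 1 (a * x3 % 3) (c * y3 % 3) t3) = true →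
      SZS g := by
    intro p q r hp hq hr hne hcomb
    rw [← combB_transfer] at hcomb
    exact comb_sound a c p q r hp hq hr _ _ _ hne g h0 h1 h2 s t k hs ht hk h3 h4 (Or.inr h5) hcomb
  rcases H with H | H
  · rw [pairB, Bool.or_eq_true] at H
    rcases H with H | H
    · rw [combB_zero _ _ _ _ _ _ _ (mkV 1 1 (a * x3 % 3) (c * y3 % 3) t3)] at H
      exact fin 1 1 0 (by simp) (by simp) (by simp) (by simp) H
    · rw [combB_zero _ _ _ _ _ _ _ (mkV 1 1 (a * x3 % 3) (c * y3 % 3) t3)] at H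
      exact fin 1 8 0 (by simp) (by simp) (by simp) (by simp) H
  · rw [List.all_eq_true] at H
    have H := H _ (mV x3 y3 t3 ht3)
    rw [tripleB, List.any_eq_true] at H
    obtain ⟨p, hp, H⟩ := H
    rw [List.any_eq_true] at H
    obtain ⟨q, hq, H⟩ := H
    exact fin p q 1 (by simpa using hp) (by simpa using hq) (by simp) (by simp) H

/-- Multiplication by three `ZMod 3 → ZMod 9`. -/
def iot : ZMod 3 →+ ZMod 9 where
  toFun x := 3 * (x.val : ZMod 9)
  map_zero' := by decide
  map_add' := by decide

/-- Reduction `ZMod 9 → ZMod 3`. -/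
def red : ZMod 9 →+ ZMod 3 where
  toFun x := (x.val : ZMod 3)
  map_zero' := by decide
  map_add' := by decide

def homM (p q r s k l : ZMod 3) : GG →+ GG where
  toFun x := (p * x.1 + q * x.2.1, r * x.1 + s * x.2.1, x.2.2 + iot (k * x.1 + l * x.2.1))
  map_zero' := by ext <;> simp
  map_add' x y := by
    ext
    · simp; ring
    · simp; ring
    · simp only [Prod.snd_add, Prod.fst_add, mul_add, map_add]; ring

def homN (e f : ZMod 3) (u : ZMod 9) : GG →+ GG where
  toFun x := (x.1 + e * red x.2.2, x.2.1 + f * red x.2.2, u * x.2.2)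
  map_zero' := by ext <;> simp
  map_add' x y := by
    ext <;> simp only [Prod.snd_add, Prod.fst_add, mul_add, map_add] <;> ring

lemma homM_inj (p q r s k l : ZMod 3) (hd : p * s - q * r ≠ 0) (x : GG)
    (hx : homM p q r s k l x = 0) : x = 0 := by
  obtain ⟨x, y, z⟩ := x
  have H1 : p * x + q * y = 0 := congrArg Prod.fst hx
  have H2 : r * x + s * y = 0 := congrArg (fun t => t.2.1) hx
  have H3 : z + iot (k * x + l * y) = 0 := congrArg (fun t => t.2.2) hx
  have : Fact (Nat.Prime 3) := ⟨by norm_num⟩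
  have hx0 : x = 0 := by
    have : (p * s - q * r) * x = 0 := by linear_combination s * H1 - q * H2
    exact (mul_eq_zero.1 this).resolve_left hd
  have hy0 : y = 0 := by
    have : (p * s - q * r) * y = 0 := by linear_combination p * H2 - r * H1
    exact (mul_eq_zero.1 this).resolve_left hd
  subst hx0 hy0
  simp at H3
  simp [H3]

def subA : AddSubgroup GG where
  carrier := {x | 3 * x.2.2 = 0}
  zero_mem' := by simp
  add_mem' := by intro a b ha hb; simp_all [mul_add]
  neg_mem' := by intro a ha; simp_all

def subB : AddSubgroup GG where
  carrier := {x | x.1 = 0 ∧ x.2.1 = 0}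
  zero_mem' := by simp
  add_mem' := by intro a b ha hb; simp_all
  neg_mem' := by intro a ha; simp_all

def subC : AddSubgroup GG where
  carrier := {x | x.2.1 = 0}
  zero_mem' := by simp
  add_mem' := by intro a b ha hb; simp_all
  neg_mem' := by intro a ha; simp_all

lemma cast_cases (z : ZMod 9) (h : z = 0 ∨ z = 1 ∨ z = 2) : ∃ a : ℕ, a ∈ [0, 1, 2] ∧ z = a := by
  rcases h with rfl | rfl | rfl
  · exact ⟨0, by simp⟩
  · exact ⟨1, by simp⟩
  · exact ⟨2, by simp⟩

lemma step3 (a : ℕ) (g : Fin 6 → GG) (h0 : g 0 = (0, 0, 1))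
    (h1 : g 1 = (1, 0, (a : ZMod 9))) : SZS g := by
  by_cases hH : ∀ i, g i ∈ subC
  · exact szs_of_small subC (univ.filter fun x => x.2.1 = 0)
      (fun x hx => by rw [Finset.mem_filter]; exact ⟨Finset.mem_univ _, hx⟩) (by decide +kernel) g hH
  push Not at hH
  obtain ⟨i, hi⟩ := hH
  have i0 : i ≠ 0 := by rintro rfl; exact hi (by rw [h0]; rfl)
  have i1 : i ≠ 1 := by rintro rfl; exact hi (by rw [h1]; rfl)
  apply SZS.of_perm (Equiv.swap 2 i)
  set g' := g ∘ Equiv.swap 2 i with hg'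
  have h0' : g' 0 = (0, 0, 1) := by
    rw [hg', Function.comp_apply, Equiv.swap_apply_of_ne_of_ne (by decide) i0.symm, h0]
  have h1' : g' 1 = (1, 0, (a : ZMod 9)) := by
    rw [hg', Function.comp_apply, Equiv.swap_apply_of_ne_of_ne (by decide) i1.symm, h1]
  have h2' : (g' 2).2.1 ≠ 0 := by
    rw [hg', Function.comp_apply, Equiv.swap_apply_left]; exact hi
  obtain ⟨⟨P, Q, R⟩, hh⟩ : ∃ t, g' 2 = t := ⟨_, rfl⟩
  rw [hh] at h2'
  have e1 : ∀ P Q : ZMod 3, Q ≠ 0 → ∃ q s : ZMod 3, 1 * s - q * 0 ≠ 0 ∧ 1 * P + q * Q = 0 ∧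
    0 * P + s * Q = 1 := by decide
  have e2 : ∀ P Q : ZMod 3, ∀ R : ZMod 9, Q ≠ 0 → ∃ l : ZMod 3,
    (R + iot (0 * P + l * Q) = 0 ∨ R + iot (0 * P + l * Q) = 1 ∨ R + iot (0 * P + l * Q) = 2) := by
    decide
  obtain ⟨q, s, hd, hp1, hp2⟩ := e1 P Q h2'
  obtain ⟨l, hl⟩ := e2 P Q R h2'
  obtain ⟨c, hc, hcz⟩ := cast_cases _ hl
  apply SZS.of_hom (homM 1 q 0 s 0 l) (homM_inj _ _ _ _ _ _ hd)
  apply normal_case a c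
  · rw [Function.comp_apply, h0']; simp [homM]
  · rw [Function.comp_apply, h1']; simp [homM]
  · rw [Function.comp_apply, hh]
    change (1 * P + q * Q, 0 * P + s * Q, R + iot (0 * P + l * Q)) = _
    rw [hp1, hp2, hcz]

lemma step2 (g : Fin 6 → GG) (h0 : g 0 = (0, 0, 1)) : SZS g := by
  by_cases hH : ∀ i, g i ∈ subB
  · exact szs_of_small subB (univ.filter fun x => x.1 = 0 ∧ x.2.1 = 0)
      (fun x hx => by rw [Finset.mem_filter]; exact ⟨Finset.mem_univ _, hx⟩)
      (by decide +kernel) g hH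
  push Not at hH
  obtain ⟨i, hi⟩ := hH
  have i0 : i ≠ 0 := by rintro rfl; exact hi (by rw [h0]; exact ⟨rfl, rfl⟩)
  apply SZS.of_perm (Equiv.swap 1 i)
  set g' := g ∘ Equiv.swap 1 i with hg'
  have h0' : g' 0 = (0, 0, 1) := by
    rw [hg', Function.comp_apply, Equiv.swap_apply_of_ne_of_ne (by decide) i0.symm, h0]
  have h2' : ¬ ((g' 1).1 = 0 ∧ (g' 1).2.1 = 0) := by
    rw [hg', Function.comp_apply, Equiv.swap_apply_left]; exact hi
  obtain ⟨⟨P, Q, R⟩, hh⟩ : ∃ t, g' 1 = t := ⟨_, rfl⟩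
  rw [hh] at h2'
  have e1 : ∀ P Q : ZMod 3, ¬ (P = 0 ∧ Q = 0) → ∃ p q r s : ZMod 3, p * s - q * r ≠ 0 ∧
    p * P + q * Q = 1 ∧ r * P + s * Q = 0 := by decide
  have e2 : ∀ P Q : ZMod 3, ∀ R : ZMod 9, ¬ (P = 0 ∧ Q = 0) → ∃ k l : ZMod 3,
    (R + iot (k * P + l * Q) = 0 ∨ R + iot (k * P + l * Q) = 1 ∨ R + iot (k * P + l * Q) = 2) := by
    decide +kernel
  obtain ⟨p, q, r, s, hd, hp1, hp2⟩ := e1 P Q h2'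
  obtain ⟨k, l, hl⟩ := e2 P Q R h2'
  obtain ⟨a, ha, haz⟩ := cast_cases _ hl
  apply SZS.of_hom (homM p q r s k l) (homM_inj _ _ _ _ _ _ hd)
  apply step3 a
  · rw [Function.comp_apply, h0']; simp [homM]
  · rw [Function.comp_apply, hh]
    change (p * P + q * Q, r * P + s * Q, R + iot (k * P + l * Q)) = _
    rw [hp1, hp2, haz]

lemma step1 (g : Fin 6 → GG) : SZS g := by
  by_cases hH : ∀ i, g i ∈ subA
  · exact szs_of_small subA (univ.filter fun x => 3 * x.2.2 = 0)
      (fun x hx => by rw [Finset.mem_filter]; exact ⟨Finset.mem_univ _, hx⟩)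
      (by decide +kernel) g hH
  push Not at hH
  obtain ⟨i, hi⟩ := hH
  apply SZS.of_perm (Equiv.swap 0 i)
  set g' := g ∘ Equiv.swap 0 i with hg'
  have h2' : ¬ (3 * (g' 0).2.2 = 0) := by
    rw [hg', Function.comp_apply, Equiv.swap_apply_left]; exact hi
  obtain ⟨⟨P, Q, R⟩, hh⟩ : ∃ t, g' 0 = t := ⟨_, rfl⟩
  rw [hh] at h2'
  have e1 : ∀ P : ZMod 3, ∀ R : ZMod 9, ¬ (3 * R = 0) → ∃ e : ZMod 3, P + e * red R = 0 := by
    decide +kernel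
  have e2 : ∀ R : ZMod 9, ¬ (3 * R = 0) → ∃ u : ZMod 9, u * R = 1 := by decide +kernel
  obtain ⟨e, he⟩ := e1 P R h2'
  obtain ⟨f, hf⟩ := e1 Q R h2'
  obtain ⟨u, hu⟩ := e2 R h2'
  apply SZS.of_hom (homN e f u)
  · rintro ⟨x, y, z⟩ hx
    have H1 : x + e * red z = 0 := congrArg Prod.fst hx
    have H2 : y + f * red z = 0 := congrArg (fun t => t.2.1) hx
    have H3 : u * z = 0 := congrArg (fun t => t.2.2) hx
    have hz : z = 0 := by linear_combination R * H3 - z * hu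
    subst hz
    simp at H1 H2
    simp [H1, H2]
  · apply step2
    rw [Function.comp_apply, hh]
    change (P + e * red R, Q + f * red R, u * R) = _
    rw [he, hf, hu]

def ex5 : Fin 5 → GG := ![(1, 0, 0), (0, 1, 0), (0, 0, 1), (0, 0, 2), (0, 0, 4)]

lemma ex5_free : ¬ SZS ex5 := by
  rintro ⟨e, he, ⟨i, hi⟩, hs⟩
  simp only [Fin.sum_univ_five, ex5] at hs
  have b0 := he 0
  have b1 := he 1
  have b2 := he 2
  have b3 := he 3
  have b4 := he 4
  have H1 := congrArg Prod.fst hs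
  have H2 := congrArg (fun t => t.2.1) hs
  have H3 := congrArg (fun t => t.2.2) hs
  simp at H1 H2 H3
  have d1 : (3 : ℤ) ∣ e 0 := by exact_mod_cast (ZMod.intCast_zmod_eq_zero_iff_dvd (e 0) 3).1 H1
  have d2 : (3 : ℤ) ∣ e 1 := by exact_mod_cast (ZMod.intCast_zmod_eq_zero_iff_dvd (e 1) 3).1 H2
  have d3 : (9 : ℤ) ∣ e 2 + e 3 * 2 + e 4 * 4 := by
    have := (ZMod.intCast_zmod_eq_zero_iff_dvd (e 2 + e 3 * 2 + e 4 * 4) 9).1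
      (by push_cast; exact H3)
    exact_mod_cast this
  apply hi
  have hall : e 0 = 0 ∧ e 1 = 0 ∧ e 2 = 0 ∧ e 3 = 0 ∧ e 4 = 0 := by
    have c3 : e 3 = -1 ∨ e 3 = 0 ∨ e 3 = 1 := by omega
    have c4 : e 4 = -1 ∨ e 4 = 0 ∨ e 4 = 1 := by omega
    clear hi
    rcases c3 with c3 | c3 | c3 <;> rcases c4 with c4 | c4 | c4 <;> rw [c3, c4] at d3 <;> omega
  obtain ⟨z0, z1, z2, z3, z4⟩ := hall
  fin_cases i
  · exact z0
  · exact z1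
  · exact z2
  · exact z3
  · exact z4

lemma free_le {n : ℕ} (hn : n ≤ 5) : ¬ SZS (ex5 ∘ Fin.castLE hn) := by
  rintro ⟨e, he, ⟨i, hi⟩, hs⟩
  apply ex5_free
  have hinj := Fin.castLE_injective hn
  refine ⟨Function.extend (Fin.castLE hn) e 0, ?_, ⟨Fin.castLE hn i, by rwa [hinj.extend_apply]⟩, ?_⟩
  · intro j
    by_cases hj : ∃ k, Fin.castLE hn k = j
    · obtain ⟨k, rfl⟩ := hj
      rw [hinj.extend_apply]; exact he k
    · rw [Function.extend_apply' _ _ _ hj]; simp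
  · rw [← hs]
    symm
    apply Finset.sum_of_injOn (Fin.castLE hn) hinj.injOn (by simp)
    · intro j _ hj
      rw [Function.extend_apply' _ _ _ (fun ⟨k, hk⟩ => hj ⟨k, by simp, hk⟩)]; simp
    · intro k _
      rw [hinj.extend_apply]; rfl

theorem stmt14 : Davpm (ZMod 3 × ZMod 3 × ZMod 9) = 6 := by
  have h6 : 6 ∈ {ℓ : ℕ | ∀ g : Fin ℓ → ZMod 3 × ZMod 3 × ZMod 9,
      HasWZS ({1, -1} : Set ℤ) g} := fun g => (step1 g).hasWZS
  apply le_antisymm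
  · exact Nat.sInf_le h6
  · refine le_csInf ⟨6, h6⟩ ?_
    intro n hn
    by_contra hlt
    have h5 : n ≤ 5 := by omega
    exact free_le h5 (hn _).szs
end

section
/- For every integer n ≥ 2, D_±(C_2 ⊕ C_{2n}) = ⌊log₂(4n)⌋ + 1. -/
open Finset

lemma pm_upper {G : Type*} [AddCommGroup G] [Fintype G] (ℓ : ℕ)
    (h : Fintype.card G < 2 ^ ℓ) (g : Fin ℓ → G) : HasWZS ({1, -1} : Set ℤ) g := by
  classical
  have hc : Fintype.card G < Fintype.card (Finset (Fin ℓ)) := by simpa using h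
  obtain ⟨A, B, hAB, hs⟩ :=
    Fintype.exists_ne_map_eq_of_card_lt (fun A : Finset (Fin ℓ) => ∑ i ∈ A, g i) hc
  refine ⟨(A \ B) ∪ (B \ A), fun i => if i ∈ A then 1 else -1, ?_, ?_, ?_⟩
  · by_contra hne
    rw [Finset.not_nonempty_iff_eq_empty, Finset.union_eq_empty] at hne
    exact hAB (Finset.Subset.antisymm (Finset.sdiff_eq_empty_iff_subset.1 hne.1)
      (Finset.sdiff_eq_empty_iff_subset.1 hne.2))
  · intro i _
    by_cases hi : i ∈ A <;> simp [hi]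
  · rw [Finset.sum_union disjoint_sdiff_sdiff]
    have h1 : ∑ i ∈ A \ B, (if i ∈ A then (1 : ℤ) else -1) • g i = ∑ i ∈ A \ B, g i :=
      Finset.sum_congr rfl fun i hi => by simp [(Finset.mem_sdiff.1 hi).1]
    have h2 : ∑ i ∈ B \ A, (if i ∈ A then (1 : ℤ) else -1) • g i = - ∑ i ∈ B \ A, g i := by
      rw [← Finset.sum_neg_distrib]
      exact Finset.sum_congr rfl fun i hi => by simp [(Finset.mem_sdiff.1 hi).2]
    rw [h1, h2, ← sub_eq_add_neg, Finset.sum_sdiff_sub_sum_sdiff, hs, sub_self]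

lemma pm_pow_ne {ℓ : ℕ} (I : Finset (Fin ℓ)) (a : Fin ℓ → ℤ) (hI : I.Nonempty)
    (ha : ∀ i ∈ I, a i = 1 ∨ a i = -1) : ∑ i ∈ I, a i * 2 ^ (i : ℕ) ≠ 0 := by
  classical
  intro h
  have hm := I.min'_mem hI
  set m := I.min' hI with hmdef
  rw [← Finset.add_sum_erase _ _ hm] at h
  have hd : (2 : ℤ) ^ ((m : ℕ) + 1) ∣ ∑ i ∈ I.erase m, a i * 2 ^ (i : ℕ) := by
    refine Finset.dvd_sum fun i hi => Dvd.dvd.mul_left (pow_dvd_pow _ ?_) _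
    have h1 : m ≤ i := I.min'_le i (Finset.mem_of_mem_erase hi)
    have h2 : i ≠ m := Finset.ne_of_mem_erase hi
    have h3 : m < i := lt_of_le_of_ne h1 (Ne.symm h2)
    exact h3
  obtain ⟨c, hc⟩ := hd
  rw [hc, pow_succ] at h
  have h4 : (2 : ℤ) ^ (m : ℕ) * (a m + 2 * c) = 0 := by linarith
  have h5 : a m + 2 * c = 0 := by
    rcases mul_eq_zero.1 h4 with h | h
    · exact absurd h (by positivity)
    · exact h
  rcases ha m hm with h | h <;> omega

lemma pm_lower (n ℓ : ℕ) (h : 2 ^ ℓ ≤ 4 * n) :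
    ∃ g : Fin ℓ → ZMod 2 × ZMod (2 * n), ¬ HasWZS ({1, -1} : Set ℤ) g := by
  classical
  refine ⟨fun i => if (i : ℕ) = 0 then (1, 0) else (0, ((2 ^ ((i : ℕ) - 1) : ℤ) : ZMod (2 * n))), ?_⟩
  rintro ⟨I, a, hI, ha, hs⟩
  have ha' : ∀ i ∈ I, a i = 1 ∨ a i = -1 := fun i hi => by simpa using ha i hi
  have h1 := congrArg Prod.fst hs
  have h2 := congrArg Prod.snd hs
  rw [Prod.fst_sum] at h1
  rw [Prod.snd_sum] at h2
  have h0 : ∀ i ∈ I, (i : ℕ) ≠ 0 := by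
    intro i hi hi0
    rw [Finset.sum_eq_single_of_mem i hi] at h1
    · rcases ha' i hi with h | h <;> simp [hi0, h] at h1
    · intro j _ hj
      have : (j : ℕ) ≠ 0 := fun hj0 => hj (Fin.ext (by omega))
      simp [this]
  have h3 : ((∑ i ∈ I, a i * 2 ^ ((i : ℕ) - 1) : ℤ) : ZMod (2 * n)) = 0 := by
    rw [← Prod.snd_zero (M := ZMod 2) (N := ZMod (2 * n)), ← h2, Int.cast_sum]
    refine Finset.sum_congr rfl fun i hi => ?_
    simp [h0 i hi]
  rw [ZMod.intCast_zmod_eq_zero_iff_dvd] at h3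
  have h4 : ∑ i ∈ I, a i * 2 ^ (i : ℕ) = 2 * ∑ i ∈ I, a i * 2 ^ ((i : ℕ) - 1) := by
    rw [Finset.mul_sum]
    refine Finset.sum_congr rfl fun i hi => ?_
    obtain ⟨k, hk⟩ := Nat.exists_eq_succ_of_ne_zero (h0 i hi)
    rw [hk, Nat.succ_sub_one, pow_succ]; ring
  refine pm_pow_ne I a hI ha' ?_
  refine Int.eq_zero_of_abs_lt_dvd (m := 4 * n) ?_ ?_
  · rw [h4]
    obtain ⟨c, hc⟩ := h3
    exact ⟨c, by rw [hc]; push_cast; ring⟩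
  · have hb : |∑ i ∈ I, a i * 2 ^ (i : ℕ)| ≤ ∑ i : Fin ℓ, (2 : ℤ) ^ (i : ℕ) := by
      refine (Finset.abs_sum_le_sum_abs _ _).trans ?_
      refine le_trans (le_of_eq (Finset.sum_congr rfl fun i hi => ?_))
        (Finset.sum_le_sum_of_subset_of_nonneg (Finset.subset_univ I) fun i _ _ => by positivity)
      rcases ha' i hi with h | h <;> simp [h]
    have hg : ∑ i : Fin ℓ, (2 : ℤ) ^ (i : ℕ) = 2 ^ ℓ - 1 := by
      rw [Fin.sum_univ_eq_sum_range (fun i => (2 : ℤ) ^ i)]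
      have := geom_sum_mul (2 : ℤ) ℓ
      linarith
    have h' : (2 : ℤ) ^ ℓ ≤ 4 * n := by exact_mod_cast h
    linarith

theorem stmt16 (n : ℕ) (hn : 2 ≤ n) :
    (Davpm (ZMod 2 × ZMod (2 * n)) : ℤ) = ⌊Real.logb 2 (4 * (n : ℝ))⌋ + 1 := by
  have hfl : ⌊Real.logb 2 (4 * (n : ℝ))⌋ = (Nat.log 2 (4 * n) : ℤ) := by
    have h := Real.floor_logb_natCast (b := 2) (r := ((4 * n : ℕ) : ℝ)) (by positivity)
    rw [Int.log_natCast] at h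
    rw [← h]
    push_cast
    rfl
  haveI : NeZero (2 * n) := ⟨by omega⟩
  have hD : Davpm (ZMod 2 × ZMod (2 * n)) = Nat.log 2 (4 * n) + 1 := by
    unfold Davpm DavW
    have hmem : Nat.log 2 (4 * n) + 1 ∈
        {ℓ : ℕ | ∀ g : Fin ℓ → ZMod 2 × ZMod (2 * n), HasWZS ({1, -1} : Set ℤ) g} := by
      intro g
      refine pm_upper _ ?_ g
      rw [Fintype.card_prod, ZMod.card, ZMod.card]
      have := Nat.lt_pow_succ_log_self (b := 2) (by norm_num) (4 * n)
      rw [Nat.succ_eq_add_one] at this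
      omega
    refine le_antisymm (Nat.sInf_le hmem) (le_csInf ⟨_, hmem⟩ ?_)
    intro ℓ hℓ
    by_contra hlt
    obtain ⟨g, hg⟩ := pm_lower n ℓ
      ((Nat.pow_le_pow_right (by norm_num) (by omega)).trans
        (Nat.pow_log_le_self 2 (x := 4 * n) (by omega)))
    exact hg (hℓ g)
  rw [hfl, hD]
  push_cast
  rfl
end

section
/- Let m ≥ 2 be an integer, let e be a generating element of the cyclic group C_m, and let k = ⌊log₂ m⌋. Then the sequence e, 2e, 4e, …, 2^{k−1}e (of length k) has no plus-minus weighted zero-subsum; consequently D_±(C_m) ≥ ⌊log₂ m⌋ + 1. -/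
open Finset

lemma aux_sum (c : ℕ → ℤ) (hc : ∀ i, c i = 0 ∨ c i = 1 ∨ c i = -1) (k : ℕ) :
    |∑ i ∈ Finset.range k, c i * 2 ^ i| < 2 ^ k ∧
    (∑ i ∈ Finset.range k, c i * 2 ^ i = 0 → ∀ i < k, c i = 0) := by
  induction k with
  | zero => simp
  | succ k ih =>
    obtain ⟨h1, h2⟩ := ih
    rw [Finset.sum_range_succ, pow_succ]
    rw [abs_lt] at h1 ⊢
    have hp : (0 : ℤ) < 2 ^ k := by positivity
    refine ⟨?_, ?_⟩
    · rcases hc k with h | h | h <;> rw [h] <;> constructor <;> linarith [h1.1, h1.2]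
    · intro hs i hi
      have hk : c k = 0 := by
        rcases hc k with h | h | h
        · exact h
        · rw [h] at hs; linarith [h1.1, h1.2]
        · rw [h] at hs; linarith [h1.1, h1.2]
      rw [hk] at hs
      rcases Nat.lt_succ_iff_lt_or_eq.mp hi with h | h
      · exact h2 (by linarith) i h
      · rw [h]; exact hk

lemma aux_noWZS (m k : ℕ) (hk : 2 ^ k ≤ m) (e : ZMod m) (he : addOrderOf e = m) :
    ¬ HasWZS ({1, -1} : Set ℤ) (fun i : Fin k => (2 ^ (i : ℕ)) • e) := by
  rintro ⟨I, a, ⟨i₀, hi₀⟩, ha, hs⟩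
  let c : ℕ → ℤ := fun n => if h : n < k then (if (⟨n, h⟩ : Fin k) ∈ I then a ⟨n, h⟩ else 0) else 0
  have hcv : ∀ i : Fin k, c i = if i ∈ I then a i else 0 := by
    intro i; simp [c]
  have hc : ∀ i, c i = 0 ∨ c i = 1 ∨ c i = -1 := by
    intro n
    by_cases h : n < k
    · have := hcv ⟨n, h⟩
      simp only at this
      rw [this]
      split_ifs with hI
      · right; simpa using ha _ hI
      · left; rfl
    · left; simp [c, h]
  obtain ⟨h1, h2⟩ := aux_sum c hc k
  have hS : (∑ i ∈ Finset.range k, c i * 2 ^ i) • e = 0 := by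
    rw [Finset.sum_range, Finset.sum_smul, ← hs, ← Finset.sum_filter_add_sum_filter_not univ (· ∈ I)]
    have hz : ∑ x ∈ univ.filter (fun x : Fin k => ¬ x ∈ I), (c x * 2 ^ (x : ℕ)) • e = 0 := by
      apply Finset.sum_eq_zero
      intro x hx
      rw [hcv, if_neg (by simpa using hx)]; simp
    rw [hz, add_zero]
    apply Finset.sum_congr (by ext; simp)
    intro x hx
    rw [hcv, if_pos hx, mul_smul]
    congr 1
    show ((2 : ℤ) ^ (x : ℕ)) • e = ((2 : ℕ) ^ (x : ℕ)) • e
    rw [← natCast_zsmul]; push_cast; rfl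
  have hd : (m : ℤ) ∣ ∑ i ∈ Finset.range k, c i * 2 ^ i := by
    have := addOrderOf_dvd_iff_zsmul_eq_zero.mpr hS
    rwa [he] at this
  have h0 : ∑ i ∈ Finset.range k, c i * 2 ^ i = 0 := by
    apply Int.eq_zero_of_abs_lt_dvd hd
    exact lt_of_lt_of_le h1 (by exact_mod_cast hk)
  have := h2 h0 i₀ i₀.2
  rw [hcv, if_pos hi₀] at this
  have h3 := ha _ hi₀
  rw [this] at h3
  simp at h3

lemma aux_exists (m : ℕ) (hm : 2 ≤ m) (g : Fin m → ZMod m) : HasWZS ({1, -1} : Set ℤ) g := by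
  have : NeZero m := ⟨by omega⟩
  have hcard : Fintype.card (ZMod m) < Fintype.card (Finset (Fin m)) := by
    rw [ZMod.card, Fintype.card_finset, Fintype.card_fin]
    exact Nat.lt_two_pow_self
  obtain ⟨A, B, hAB, hs⟩ := Fintype.exists_ne_map_eq_of_card_lt
    (fun I : Finset (Fin m) => ∑ i ∈ I, g i) hcard
  refine ⟨(A \ B) ∪ (B \ A), fun i => if i ∈ A then 1 else -1, ?_, ?_, ?_⟩
  · rw [Finset.nonempty_iff_ne_empty]
    intro h
    apply hAB
    ext x
    have := Finset.ext_iff.mp h x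
    simp at this
    tauto
  · intro i _
    simp only
    split_ifs <;> simp
  · rw [Finset.sum_union (by
      rw [Finset.disjoint_left]; intro x hx hx'; simp at hx hx'; tauto)]
    have e1 : ∑ i ∈ A \ B, (if i ∈ A then (1 : ℤ) else -1) • g i = ∑ i ∈ A \ B, g i := by
      apply Finset.sum_congr rfl
      intro x hx
      rw [if_pos (Finset.mem_sdiff.mp hx).1, one_smul]
    have e2 : ∑ i ∈ B \ A, (if i ∈ A then (1 : ℤ) else -1) • g i = - ∑ i ∈ B \ A, g i := by
      rw [← Finset.sum_neg_distrib]
      apply Finset.sum_congr rfl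
      intro x hx
      rw [if_neg (Finset.mem_sdiff.mp hx).2, neg_smul, one_smul]
    rw [e1, e2, ← sub_eq_add_neg, Finset.sum_sdiff_sub_sum_sdiff]
    exact sub_eq_zero.mpr hs

theorem stmt19 (m : ℕ) (hm : 2 ≤ m) (e : ZMod m) (he : addOrderOf e = m) :
    ¬ HasWZS ({1, -1} : Set ℤ)
        (fun i : Fin (Nat.log 2 m) => (2 ^ (i : ℕ)) • e) ∧
    Nat.log 2 m + 1 ≤ Davpm (ZMod m) := by
  have hlog : 2 ^ Nat.log 2 m ≤ m := Nat.pow_log_le_self 2 (by omega)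
  refine ⟨aux_noWZS m _ hlog e he, ?_⟩
  unfold Davpm DavW
  refine le_csInf ⟨m, fun g => aux_exists m hm g⟩ ?_
  intro l hl
  by_contra h
  exact aux_noWZS m l ((Nat.pow_le_pow_right (by norm_num) (by omega)).trans hlog) e he (hl _)
end
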